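/- arXiv:1603.05702 — 3 statements merged into one kernel-verified Lean document; each statement's English description precedes it below -/
import Mathlib

section
/- Let A be a semigroup in a braided monoidal category C whose multiplication m is non-degenerate with respect to some class of objects containing A, and let t₁, t₂, t₃, t₄ : A⊗A → A⊗A be morphisms. If, for distinct indices i, j, k ∈ {1,2,3,4}, the compatibility relation involving tᵢ and tⱼ holds and the compatibility relation involving tᵢ and t_k holds, then the compatibility relation involving tⱼ and t_k also holds. -/
open CategoryTheory Category MonoidalCategory

universe v u

namespace WeakMultiplierBimonoid

variable {C : Type u} [Category.{v} C] [MonoidalCategory C] [BraidedCategory C]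

/-- For `f : A ⊗ A ⟶ A ⊗ A`, the morphism `f ⊗ 1 : A ⊗ (A ⊗ A) ⟶ A ⊗ (A ⊗ A)`. -/
def wl {A : C} (f : A ⊗ A ⟶ A ⊗ A) : A ⊗ (A ⊗ A) ⟶ A ⊗ (A ⊗ A) :=
  (α_ A A A).inv ≫ (f ▷ A) ≫ (α_ A A A).hom

/-- For `f : A ⊗ A ⟶ A`, the morphism `f ⊗ 1 : A ⊗ (A ⊗ A) ⟶ A ⊗ A`. -/
def ml {A : C} (f : A ⊗ A ⟶ A) : A ⊗ (A ⊗ A) ⟶ A ⊗ A :=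
  (α_ A A A).inv ≫ (f ▷ A)

/-- A morphism `v : Z ⊗ V ⟶ W` is non-degenerate on the left with respect to a class
`𝒴` of objects if for every `X` and every `Y ∈ 𝒴` the map
`Hom(X, V ⊗ Y) → Hom(Z ⊗ X, W ⊗ Y)`, `g ↦ (v ⊗ 1) ∘ (1 ⊗ g)`, is injective. -/
def NdLeftOn {Z V W : C} (v : Z ⊗ V ⟶ W) (𝒴 : Set C) : Prop :=
  ∀ (X : C), ∀ Y ∈ 𝒴, Function.Injective
    (fun g : X ⟶ V ⊗ Y => (Z ◁ g) ≫ (α_ Z V Y).inv ≫ (v ▷ Y))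

/-- Non-degenerate on the right with respect to `𝒴`: `v ∘ c` is non-degenerate on the
left with respect to `𝒴`. -/
def NdRightOn {Z V W : C} (v : Z ⊗ V ⟶ W) (𝒴 : Set C) : Prop :=
  NdLeftOn ((β_ V Z).hom ≫ v) 𝒴

/-- Relation (c12): `(m ⊗ 1) ∘ (1 ⊗ t₁) = (1 ⊗ m) ∘ (t₂ ⊗ 1)`. -/
def C12 {A : C} (m : A ⊗ A ⟶ A) (t₁ t₂ : A ⊗ A ⟶ A ⊗ A) : Prop :=
  (A ◁ t₁) ≫ ml m = wl t₂ ≫ (A ◁ m)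

/-- Relation (c13): `(1 ⊗ m) ∘ (1 ⊗ c) ∘ (t₁ ⊗ 1) = (1 ⊗ m) ∘ (t₃ ⊗ 1) ∘ (1 ⊗ c)`. -/
def C13 {A : C} (m : A ⊗ A ⟶ A) (t₁ t₃ : A ⊗ A ⟶ A ⊗ A) : Prop :=
  wl t₁ ≫ (A ◁ (β_ A A).hom) ≫ (A ◁ m)
    = (A ◁ (β_ A A).hom) ≫ wl t₃ ≫ (A ◁ m)

/-- Relation (c14): `(m ⊗ 1) ∘ (c ⊗ 1) ∘ (1 ⊗ t₁) = (1 ⊗ m) ∘ (t₄ ⊗ 1)`. -/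
def C14 {A : C} (m : A ⊗ A ⟶ A) (t₁ t₄ : A ⊗ A ⟶ A ⊗ A) : Prop :=
  (A ◁ t₁) ≫ wl (β_ A A).hom ≫ ml m = wl t₄ ≫ (A ◁ m)

/-- Relation (c23): `(1 ⊗ m) ∘ (1 ⊗ c) ∘ (t₂ ⊗ 1) = (m ⊗ 1) ∘ (1 ⊗ t₃)`. -/
def C23 {A : C} (m : A ⊗ A ⟶ A) (t₂ t₃ : A ⊗ A ⟶ A ⊗ A) : Prop :=
  wl t₂ ≫ (A ◁ (β_ A A).hom) ≫ (A ◁ m) = (A ◁ t₃) ≫ ml m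

/-- Relation (c24): `(m ⊗ 1) ∘ (c ⊗ 1) ∘ (1 ⊗ t₂) = (m ⊗ 1) ∘ (1 ⊗ t₄) ∘ (c ⊗ 1)`. -/
def C24 {A : C} (m : A ⊗ A ⟶ A) (t₂ t₄ : A ⊗ A ⟶ A ⊗ A) : Prop :=
  (A ◁ t₂) ≫ wl (β_ A A).hom ≫ ml m = wl (β_ A A).hom ≫ (A ◁ t₄) ≫ ml m

/-- Relation (c34): `(m ⊗ 1) ∘ (c ⊗ 1) ∘ (1 ⊗ t₃) = (1 ⊗ m) ∘ (1 ⊗ c) ∘ (t₄ ⊗ 1)`. -/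
def C34 {A : C} (m : A ⊗ A ⟶ A) (t₃ t₄ : A ⊗ A ⟶ A ⊗ A) : Prop :=
  (A ◁ t₃) ≫ wl (β_ A A).hom ≫ ml m = wl t₄ ≫ (A ◁ (β_ A A).hom) ≫ (A ◁ m)

/-- The compatibility relation "involving `tᵢ` and `tⱼ`", for indices in `{1,2,3,4}`. -/
def compatRel {A : C} (m : A ⊗ A ⟶ A) (t₁ t₂ t₃ t₄ : A ⊗ A ⟶ A ⊗ A) :
    ℕ → ℕ → Prop := fun i k =>
  match i, k with
  | 1, 2 => C12 m t₁ t₂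
  | 2, 1 => C12 m t₁ t₂
  | 1, 3 => C13 m t₁ t₃
  | 3, 1 => C13 m t₁ t₃
  | 1, 4 => C14 m t₁ t₄
  | 4, 1 => C14 m t₁ t₄
  | 2, 3 => C23 m t₂ t₃
  | 3, 2 => C23 m t₂ t₃
  | 2, 4 => C24 m t₂ t₄
  | 4, 2 => C24 m t₂ t₄
  | 3, 4 => C34 m t₃ t₄
  | 4, 3 => C34 m t₃ t₄
  | _, _ => True

/-!
For `v : Z ⊗ V ⟶ W`, acting with `v` on the first leg of `f : X ⟶ V ⊗ Y` from the left, and dually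
on the second leg from the right, rewrites each of the six relations as an equality between actions
of `m` and `m ∘ c` on the `tᵢ`. Actions on different legs commute, and by associativity the actions
of `m` and `m ∘ c` on the same leg commute up to a braiding of the inputs. So two relations with a
common index, once acted upon with `m` or `m ∘ c` on the leg they leave free, combine to the third
relation acted upon in the same manner, and this last action is cancelled by non-degeneracy.
-/

/-- The two-out-of-three property of a triple of propositions: any two of them imply the third. -/
structure TwoOutOfThree (P Q R : Prop) : Prop where
  third : P → Q → R
  second : P → R → Q
  first : Q → R → P

theorem TwoOutOfThree.of_injective {α β γ δ : Sort*} {u : α → δ} {v : β → δ} {w : γ → δ}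
    (hu : Function.Injective u) (hv : Function.Injective v) (hw : Function.Injective w)
    {a a' : α} {b b' : β} {c c' : γ} (hab : u a = v b) (hac : u a' = w c) (hbc : v b' = w c') :
    TwoOutOfThree (a = a') (b = b') (c = c') where
  third ha hb := hw (by rw [← hac, ← hbc, ← ha, ← hb, hab])
  second ha hc := hv (by rw [← hab, ha, hac, hc, hbc])
  first hb hc := hu (by rw [hab, hb, hbc, ← hc, hac])

/-- The action of a pairing `v : Z ⊗ V ⟶ W` on the first leg of `f : X ⟶ V ⊗ Y`, that is,
`(v ⊗ 1) ∘ (1 ⊗ f)`. Non-degeneracy of `v` on the left is injectivity of this action. -/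
def actLeft {Z V W X Y : C} (v : Z ⊗ V ⟶ W) (f : X ⟶ V ⊗ Y) : Z ⊗ X ⟶ W ⊗ Y :=
  Z ◁ f ≫ (α_ Z V Y).inv ≫ v ▷ Y

/-- The action of a pairing `v : V ⊗ Z ⟶ W` on the second leg of `f : X ⟶ Y ⊗ V`, that is,
`(1 ⊗ v) ∘ (f ⊗ 1)`. -/
def actRight {V Z W X Y : C} (v : V ⊗ Z ⟶ W) (f : X ⟶ Y ⊗ V) : X ⊗ Z ⟶ Y ⊗ W :=
  f ▷ Z ≫ (α_ Y V Z).hom ≫ Y ◁ v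

/-- The pairing `v ∘ c` with exchanged arguments; for a multiplication, the opposite one. -/
def braidOp {V Z W : C} (v : Z ⊗ V ⟶ W) : V ⊗ Z ⟶ W :=
  (β_ V Z).hom ≫ v

/-- The braiding of the first two of three factors. -/
def braidFst (A X : C) : A ⊗ (A ⊗ X) ⟶ A ⊗ (A ⊗ X) :=
  (α_ A A X).inv ≫ (β_ A A).hom ▷ X ≫ (α_ A A X).hom

/-- The braiding of the last two of three factors. -/
def braidSnd (X A : C) : (X ⊗ A) ⊗ A ⟶ (X ⊗ A) ⊗ A :=
  (α_ X A A).hom ≫ X ◁ (β_ A A).hom ≫ (α_ X A A).inv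

instance (A X : C) : IsIso (braidFst A X) := by
  unfold braidFst; infer_instance

instance (X A : C) : IsIso (braidSnd X A) := by
  unfold braidSnd; infer_instance

section Actions

omit [BraidedCategory C]

theorem actLeft_comp {Z V W X X' Y : C} (v : Z ⊗ V ⟶ W) (h : X' ⟶ X) (f : X ⟶ V ⊗ Y) :
    actLeft v (h ≫ f) = Z ◁ h ≫ actLeft v f := by
  simp [actLeft]

theorem actRight_comp {V Z W X X' Y : C} (v : V ⊗ Z ⟶ W) (h : X' ⟶ X) (f : X ⟶ Y ⊗ V) :
    actRight v (h ≫ f) = h ▷ Z ≫ actRight v f := by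
  simp [actRight]

theorem actLeft_whiskerRight_comp {Z Z' V W X Y : C} (h : Z' ⟶ Z) (v : Z ⊗ V ⟶ W)
    (f : X ⟶ V ⊗ Y) : actLeft (h ▷ V ≫ v) f = h ▷ X ≫ actLeft v f := by
  simp [actLeft, ← whisker_exchange_assoc]

theorem actRight_whiskerLeft_comp {V Z Z' W X Y : C} (h : Z' ⟶ Z) (v : V ⊗ Z ⟶ W)
    (f : X ⟶ Y ⊗ V) : actRight (V ◁ h ≫ v) f = X ◁ h ≫ actRight v f := by
  simp [actRight, whisker_exchange_assoc]

theorem actLeft_actLeft {Z Z' V W W' X Y : C} (v : Z' ⊗ W ⟶ W') (u : Z ⊗ V ⟶ W)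
    (f : X ⟶ V ⊗ Y) :
    actLeft v (actLeft u f) =
      (α_ Z' Z X).inv ≫ actLeft ((α_ Z' Z V).hom ≫ Z' ◁ u ≫ v) f := by
  simp [actLeft]

theorem actRight_actRight {V Z Z' W W' X Y : C} (v : W ⊗ Z' ⟶ W') (u : V ⊗ Z ⟶ W)
    (f : X ⟶ Y ⊗ V) :
    actRight v (actRight u f) =
      (α_ X Z Z').hom ≫ actRight ((α_ V Z Z').inv ≫ u ▷ Z' ≫ v) f := by
  simp [actRight]

theorem actLeft_actRight {Z V W Y Z' W' X : C} (u : Z ⊗ V ⟶ W) (v : Y ⊗ Z' ⟶ W')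
    (f : X ⟶ V ⊗ Y) :
    actLeft u (actRight v f) = (α_ Z X Z').inv ≫ actRight v (actLeft u f) := by
  have legs_exchange : u ▷ Y ▷ Z' ≫ (α_ W Y Z').hom ≫ W ◁ v =
      (α_ (Z ⊗ V) Y Z').hom ≫ (Z ⊗ V) ◁ v ≫ u ▷ W' := by
    rw [whisker_exchange]
    simp
  simp only [actLeft, actRight, comp_whiskerRight, assoc, legs_exchange]
  simp

end Actions

section Injectivity

theorem braiding_comp_actRight {V Z W X Y : C} (v : V ⊗ Z ⟶ W) (f : X ⟶ Y ⊗ V) :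
    (β_ Z X).hom ≫ actRight v f =
      actLeft (braidOp v) (f ≫ (β_ V Y).inv) ≫ (β_ W Y).hom := by
  simp only [actLeft, actRight, braidOp, MonoidalCategory.whiskerLeft_comp, comp_whiskerRight,
    assoc]
  rw [← BraidedCategory.braiding_naturality_right_assoc, BraidedCategory.braiding_naturality_left,
    BraidedCategory.braiding_naturality_left_assoc, BraidedCategory.braiding_tensor_right_hom,
    BraidedCategory.braiding_tensor_left_hom]
  simp

theorem actRight_braidOp_comp_braiding {V Z W X Y : C} (v : Z ⊗ V ⟶ W) (f : X ⟶ Y ⊗ V) :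
    actRight (braidOp v) f ≫ (β_ Y W).hom =
      (β_ X Z).hom ≫ actLeft v (f ≫ (β_ Y V).hom) := by
  have reverse : (β_ X Z).inv ≫ actRight (braidOp v) f =
      actLeft ((β_ V Z).inv ≫ braidOp v) (f ≫ (β_ Y V).hom) ≫ (β_ Y W).inv :=
    @braiding_comp_actRight C _ _ (reverseBraiding C) V Z W X Y (braidOp v) f
  rw [← cancel_epi (β_ X Z).inv, reassoc_of% reverse]
  simp [braidOp]

variable {𝒴 : Set C} {V Z W Y : C}

omit [BraidedCategory C] in
theorem NdLeftOn.actLeft_injective {v : Z ⊗ V ⟶ W} (hv : NdLeftOn v 𝒴) (hY : Y ∈ 𝒴) (X : C) :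
    Function.Injective (actLeft v : (X ⟶ V ⊗ Y) → _) :=
  hv X Y hY

theorem NdRightOn.actLeft_braidOp_injective {v : V ⊗ Z ⟶ W} (hv : NdRightOn v 𝒴) (hY : Y ∈ 𝒴)
    (X : C) : Function.Injective (actLeft (braidOp v) : (X ⟶ V ⊗ Y) → _) :=
  hv X Y hY

theorem NdRightOn.actRight_injective {v : V ⊗ Z ⟶ W} (hv : NdRightOn v 𝒴) (hY : Y ∈ 𝒴) (X : C) :
    Function.Injective (actRight v : (X ⟶ Y ⊗ V) → _) := by
  intro f g hfg
  have h := congrArg ((β_ Z X).hom ≫ ·) hfg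
  simp only [braiding_comp_actRight, cancel_mono] at h
  exact (cancel_mono _).1 (hv.actLeft_braidOp_injective hY X h)

theorem NdLeftOn.actRight_braidOp_injective {v : Z ⊗ V ⟶ W} (hv : NdLeftOn v 𝒴) (hY : Y ∈ 𝒴)
    (X : C) : Function.Injective (actRight (braidOp v) : (X ⟶ Y ⊗ V) → _) := by
  intro f g hfg
  have h := congrArg (· ≫ (β_ Y W).hom) hfg
  simp only [actRight_braidOp_comp_braiding, cancel_epi] at h
  exact (cancel_mono _).1 (hv.actLeft_injective hY X h)

end Injectivity

section Semigroup

variable {A : C} {m : A ⊗ A ⟶ A}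

theorem whiskerLeft_comp_braidOp (hassoc : ml m ≫ m = (A ◁ m) ≫ m) :
    (α_ A A A).hom ≫ A ◁ m ≫ braidOp m =
      (β_ A A).hom ▷ A ≫ (α_ A A A).hom ≫ A ◁ braidOp m ≫ m := by
  simp only [braidOp]
  rw [BraidedCategory.braiding_naturality_right_assoc, MonoidalCategory.whiskerLeft_comp, assoc,
    ← hassoc, BraidedCategory.braiding_tensor_right_hom]
  simp [ml]

theorem whiskerRight_comp_braidOp (hassoc : ml m ≫ m = (A ◁ m) ≫ m) :
    (α_ A A A).inv ≫ m ▷ A ≫ braidOp m =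
      A ◁ (β_ A A).hom ≫ (α_ A A A).inv ≫ braidOp m ▷ A ≫ m := by
  have hassoc' : m ▷ A ≫ m = (α_ A A A).hom ≫ A ◁ m ≫ m := by simp [← hassoc, ml]
  simp only [braidOp]
  rw [BraidedCategory.braiding_naturality_left_assoc, comp_whiskerRight, assoc, hassoc',
    BraidedCategory.braiding_tensor_left_hom]
  simp

theorem actLeft_braidOp_actLeft (hassoc : ml m ≫ m = (A ◁ m) ≫ m) {X Y : C} (f : X ⟶ A ⊗ Y) :
    actLeft (braidOp m) (actLeft m f) = braidFst A X ≫ actLeft m (actLeft (braidOp m) f) := by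
  rw [actLeft_actLeft, actLeft_actLeft, whiskerLeft_comp_braidOp hassoc,
    actLeft_whiskerRight_comp]
  simp [braidFst]

theorem actRight_braidOp_actRight (hassoc : ml m ≫ m = (A ◁ m) ≫ m) {X Y : C} (f : X ⟶ Y ⊗ A) :
    actRight (braidOp m) (actRight m f) =
      braidSnd X A ≫ actRight m (actRight (braidOp m) f) := by
  rw [actRight_actRight, actRight_actRight, whiskerRight_comp_braidOp hassoc,
    actRight_whiskerLeft_comp]
  simp [braidSnd]

theorem actRight_twoOutOfThree (hassoc : ml m ≫ m = (A ◁ m) ≫ m)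
    {Z V W X : C} {u : Z ⊗ V ⟶ W}
    (hu : Function.Injective (actLeft u : ((X ⊗ A) ⊗ A ⟶ V ⊗ A) → _))
    (hm : Function.Injective (actRight m : (Z ⊗ (X ⊗ A) ⟶ W ⊗ A) → _))
    (hm' : Function.Injective (actRight (braidOp m) : (Z ⊗ (X ⊗ A) ⟶ W ⊗ A) → _))
    (r s : X ⊗ A ⟶ V ⊗ A) (t : Z ⊗ X ⟶ W ⊗ A) :
    TwoOutOfThree
      (actRight (braidOp m) r = braidSnd X A ≫ actRight m s)
      (actLeft u r = (α_ Z X A).inv ≫ actRight m t)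
      (actLeft u s = (α_ Z X A).inv ≫ actRight (braidOp m) t) := by
  refine .of_injective hu
    (v := fun g => (α_ Z (X ⊗ A) A).inv ≫ actRight (braidOp m) g)
    (w := fun g => Z ◁ braidSnd X A ≫ (α_ Z (X ⊗ A) A).inv ≫ actRight m g)
    (fun _ _ h => hm' ((cancel_epi _).1 h))
    (fun _ _ h => hm ((cancel_epi _).1 ((cancel_epi _).1 h))) ?_ ?_ ?_
  · rw [actLeft_actRight]
  · rw [actLeft_comp, actLeft_actRight]
  · simp only [actRight_comp, actRight_braidOp_actRight hassoc]
    simp [braidSnd]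

theorem actLeft_twoOutOfThree (hassoc : ml m ≫ m = (A ◁ m) ≫ m)
    {Z V W X : C} {u : V ⊗ Z ⟶ W}
    (hu : Function.Injective (actRight u : (A ⊗ (A ⊗ X) ⟶ A ⊗ V) → _))
    (hm : Function.Injective (actLeft m : (A ⊗ (X ⊗ Z) ⟶ A ⊗ W) → _))
    (hm' : Function.Injective (actLeft (braidOp m) : (A ⊗ (X ⊗ Z) ⟶ A ⊗ W) → _))
    (r s : A ⊗ X ⟶ A ⊗ V) (t : X ⊗ Z ⟶ A ⊗ W) :
    TwoOutOfThree
      (actLeft m t = (α_ A X Z).inv ≫ actRight u r)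
      (actLeft (braidOp m) t = (α_ A X Z).inv ≫ actRight u s)
      (actLeft (braidOp m) r = braidFst A X ≫ actLeft m s) := by
  refine .of_injective hm'
    (v := fun g => braidFst A (X ⊗ Z) ≫ actLeft m g)
    (w := fun g => A ◁ (α_ A X Z).inv ≫ (α_ A (A ⊗ X) Z).inv ≫ actRight u g)
    (fun _ _ h => hm ((cancel_epi _).1 h))
    (fun _ _ h => hu ((cancel_epi _).1 ((cancel_epi _).1 h))) ?_ ?_ ?_
  · exact actLeft_braidOp_actLeft hassoc t
  · rw [actLeft_comp, actLeft_actRight]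
  · simp only [actLeft_comp, actLeft_actRight, actRight_comp]
    simp [braidFst]

end Semigroup

section Relations

variable {A : C} {m : A ⊗ A ⟶ A} {t₁ t₂ t₃ t₄ : A ⊗ A ⟶ A ⊗ A}

omit [BraidedCategory C] in
theorem c12_iff : C12 m t₁ t₂ ↔ actLeft m t₁ = (α_ A A A).inv ≫ actRight m t₂ := by
  simp [C12, actLeft, actRight, wl, ml]

theorem c13_iff :
    C13 m t₁ t₃ ↔ actRight (braidOp m) t₁ = braidSnd A A ≫ actRight m t₃ := by
  rw [← cancel_epi (α_ A A A).inv]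
  simp [C13, actRight, braidOp, braidSnd, wl]

theorem c14_iff : C14 m t₁ t₄ ↔ actLeft (braidOp m) t₁ = (α_ A A A).inv ≫ actRight m t₄ := by
  simp [C14, actLeft, actRight, braidOp, wl, ml]

theorem c23_iff : C23 m t₂ t₃ ↔ actLeft m t₃ = (α_ A A A).inv ≫ actRight (braidOp m) t₂ := by
  rw [eq_comm]
  simp [C23, actLeft, actRight, braidOp, wl, ml]

theorem c24_iff : C24 m t₂ t₄ ↔ actLeft (braidOp m) t₂ = braidFst A A ≫ actLeft m t₄ := by
  simp [C24, actLeft, braidOp, braidFst, wl, ml]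

theorem c34_iff :
    C34 m t₃ t₄ ↔ actLeft (braidOp m) t₃ = (α_ A A A).inv ≫ actRight (braidOp m) t₄ := by
  simp [C34, actLeft, actRight, braidOp, wl, ml]

end Relations

/-- Lemma 2.3: if, for distinct indices `i, j, k ∈ {1,2,3,4}`, the
compatibility relation involving `tᵢ` and `tⱼ` and the one involving `tᵢ` and `t_k`
hold, then so does the one involving `tⱼ` and `t_k`. -/
theorem lemma_compatibility
    (A : C) (𝒴 : Set C) (hA : A ∈ 𝒴)
    (m : A ⊗ A ⟶ A)
    (hassoc : ml m ≫ m = (A ◁ m) ≫ m)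
    (hndl : NdLeftOn m 𝒴) (hndr : NdRightOn m 𝒴)
    (t₁ t₂ t₃ t₄ : A ⊗ A ⟶ A ⊗ A) :
    ∀ i j k : ℕ, i ∈ ({1, 2, 3, 4} : Set ℕ) → j ∈ ({1, 2, 3, 4} : Set ℕ) →
      k ∈ ({1, 2, 3, 4} : Set ℕ) → i ≠ j → i ≠ k → j ≠ k →
      compatRel m t₁ t₂ t₃ t₄ i j → compatRel m t₁ t₂ t₃ t₄ i k →
      compatRel m t₁ t₂ t₃ t₄ j k := by
  have hL := hndl.actLeft_injective hA
  have hL' := hndr.actLeft_braidOp_injective hA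
  have hR := hndr.actRight_injective hA
  have hR' := hndl.actRight_braidOp_injective hA
  have h₁₂₃ : TwoOutOfThree (C13 m t₁ t₃) (C12 m t₁ t₂) (C23 m t₂ t₃) := by
    simpa only [c13_iff, c12_iff, c23_iff] using
      actRight_twoOutOfThree hassoc (hL _) (hR _) (hR' _) t₁ t₃ t₂
  have h₁₃₄ : TwoOutOfThree (C13 m t₁ t₃) (C14 m t₁ t₄) (C34 m t₃ t₄) := by
    simpa only [c13_iff, c14_iff, c34_iff] using
      actRight_twoOutOfThree hassoc (hL' _) (hR _) (hR' _) t₁ t₃ t₄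
  have h₁₂₄ : TwoOutOfThree (C12 m t₁ t₂) (C14 m t₁ t₄) (C24 m t₂ t₄) := by
    simpa only [c12_iff, c14_iff, c24_iff] using
      actLeft_twoOutOfThree hassoc (hR _) (hL _) (hL' _) t₂ t₄ t₁
  have h₂₃₄ : TwoOutOfThree (C23 m t₂ t₃) (C34 m t₃ t₄) (C24 m t₂ t₄) := by
    simpa only [c23_iff, c34_iff, c24_iff] using
      actLeft_twoOutOfThree hassoc (hR' _) (hL _) (hL' _) t₂ t₄ t₃
  rintro i j k (rfl | rfl | rfl | rfl) (rfl | rfl | rfl | rfl) (rfl | rfl | rfl | rfl)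
    hij hik hjk <;>
    first | contradiction | (simp only [compatRel]; grind [TwoOutOfThree])

end WeakMultiplierBimonoid
end

section
/- Let C be a braided monoidal category in which coequalizers exist and are preserved by taking the monoidal product with any object, and in which composites of regular epimorphisms are regular epimorphisms. Let (A, t₁,t₂,t₃,t₄,e₁,e₂,j) be a regular weak multiplier bimonoid in C whose multiplication m = (j⊗1)∘t₁ is a regular epimorphism and non-degenerate with respect to a class 𝒴 containing I, A, A⊗A and the base object L, and assume n₁ : L⊗A → A is non-degenerate on the right with respect to 𝒴. Then: (1) there is an associative multiplication μ : L⊗L → L, uniquely determined by μ∘(1⊗p) = p∘n₁, with respect to which n₁ is an associative action, i.e. n₁∘(μ⊗1) = n₁∘(1⊗n₁); (2) there is a coassociative comultiplication δ : L → L⊗L uniquely determined by δ∘p∘m = (p⊗p)∘t₁; (3) μ∘δ = 1_L; (4) δ is a morphism of L-bimodules: (μ⊗1)∘(1⊗δ) = δ∘μ = (1⊗μ)∘(δ⊗1); (5) δ admits a counit ε : L → I satisfying ε∘p = j, i.e. (ε⊗1)∘δ = 1_L = (1⊗ε)∘δ. In particular, (L, δ, ε) is a coseparable comonoid with bicomodule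 retraction μ of δ. -/
open CategoryTheory Category MonoidalCategory Limits

universe v u

namespace WeakMultiplierBimonoid

variable {C : Type u} [Category.{v} C] [MonoidalCategory C] [BraidedCategory C]

/-- The "middle braiding" `1 ⊗ c ⊗ 1 : A⁴ ⟶ A⁴` on `(A ⊗ A) ⊗ (A ⊗ A)`. -/
def midSw (A : C) : (A ⊗ A) ⊗ (A ⊗ A) ⟶ (A ⊗ A) ⊗ (A ⊗ A) :=
  (α_ A A (A ⊗ A)).hom ≫ (A ◁ (α_ A A A).inv) ≫ (A ◁ ((β_ A A).hom ▷ A)) ≫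
    (A ◁ (α_ A A A).hom) ≫ (α_ A A (A ⊗ A)).inv

/-- A regular weak multiplier bimonoid on an object `A` of a braided monoidal category,
with multiplication non-degenerate with respect to the class `𝒴`
(Definition 2.9 of the paper). -/
structure RWMB (A : C) (𝒴 : Set C) where
  t₁ : A ⊗ A ⟶ A ⊗ A
  t₂ : A ⊗ A ⟶ A ⊗ A
  t₃ : A ⊗ A ⟶ A ⊗ A
  t₄ : A ⊗ A ⟶ A ⊗ A
  e₁ : A ⊗ A ⟶ A ⊗ A
  e₂ : A ⊗ A ⟶ A ⊗ A
  j : A ⟶ 𝟙_ C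
  /-- the induced multiplication -/
  m : A ⊗ A ⟶ A
  /-- counit condition (m1); in particular `m` is the induced multiplication -/
  hm₁ : m = t₁ ≫ (j ▷ A) ≫ (λ_ A).hom
  /-- counit condition (m2) -/
  hm₂ : m = t₂ ≫ (A ◁ j) ≫ (ρ_ A).hom
  /-- counit condition (m3) -/
  hm₃ : m = (β_ A A).hom ≫ t₃ ≫ (j ▷ A) ≫ (λ_ A).hom
  /-- counit condition (m4) -/
  hm₄ : m = (β_ A A).hom ≫ t₄ ≫ (A ◁ j) ≫ (ρ_ A).hom
  /-- the class `𝒴` contains the monoidal unit -/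
  memI : (𝟙_ C) ∈ 𝒴
  memA : A ∈ 𝒴
  memAA : (A ⊗ A) ∈ 𝒴
  /-- `m` is non-degenerate on the left with respect to `𝒴` -/
  ndl : NdLeftOn m 𝒴
  /-- `m` is non-degenerate on the right with respect to `𝒴` -/
  ndr : NdRightOn m 𝒴
  /-- relation (c12) -/
  hc12 : (A ◁ t₁) ≫ ml m = wl t₂ ≫ (A ◁ m)
  /-- relation (c13) -/
  hc13 : wl t₁ ≫ (A ◁ (β_ A A).hom) ≫ (A ◁ m)
    = (A ◁ (β_ A A).hom) ≫ wl t₃ ≫ (A ◁ m)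
  /-- relation (c14) -/
  hc14 : (A ◁ t₁) ≫ wl (β_ A A).hom ≫ ml m = wl t₄ ≫ (A ◁ m)
  /-- relation (c23) -/
  hc23 : wl t₂ ≫ (A ◁ (β_ A A).hom) ≫ (A ◁ m) = (A ◁ t₃) ≫ ml m
  /-- relation (c24) -/
  hc24 : (A ◁ t₂) ≫ wl (β_ A A).hom ≫ ml m = wl (β_ A A).hom ≫ (A ◁ t₄) ≫ ml m
  /-- relation (c34) -/
  hc34 : (A ◁ t₃) ≫ wl (β_ A A).hom ≫ ml m = wl t₄ ≫ (A ◁ (β_ A A).hom) ≫ (A ◁ m)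
  /-- interchange relation for `(t₂, t₁)` -/
  hi21 : (A ◁ t₁) ≫ wl t₂ = wl t₂ ≫ (A ◁ t₁)
  /-- interchange relation for `(t₄, t₁)` -/
  hi41 : (A ◁ t₁) ≫ wl t₄ = wl t₄ ≫ (A ◁ t₁)
  /-- interchange relation for `(t₂, t₃)` -/
  hi23 : (A ◁ t₃) ≫ wl t₂ = wl t₂ ≫ (A ◁ t₃)
  /-- interchange relation for `(t₄, t₃)` -/
  hi43 : (A ◁ t₃) ≫ wl t₄ = wl t₄ ≫ (A ◁ t₃)
  /-- compatibility of the idempotents `e₁`, `e₂`: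
  `(m ⊗ m) ∘ (1 ⊗ c ⊗ 1) ∘ (1 ⊗ 1 ⊗ e₁) = (m ⊗ m) ∘ (1 ⊗ c ⊗ 1) ∘ (e₂ ⊗ 1 ⊗ 1)` -/
  hecomp : ((A ⊗ A) ◁ e₁) ≫ midSw A ≫ (m ▷ (A ⊗ A)) ≫ (A ◁ m)
    = (e₂ ▷ (A ⊗ A)) ≫ midSw A ≫ (m ▷ (A ⊗ A)) ≫ (A ◁ m)
  /-- Axiom I for the weakly counital fusion morphism `(t₁, e₁, j)` -/
  ax1 : (A ◁ t₁) ≫ wl (β_ A A).hom ≫ (A ◁ t₁) ≫ wl (β_ A A).inv ≫ wl t₁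
    = wl t₁ ≫ (A ◁ t₁)
  /-- Axiom II -/
  ax2 : e₁ ≫ e₁ = e₁
  /-- Axiom III -/
  ax3 : t₁ ≫ e₁ = t₁
  /-- Axiom IV -/
  ax4 : (A ◁ e₁) ≫ (A ◁ (β_ A A).inv) ≫ wl t₁ ≫ (A ◁ (β_ A A).hom) ≫ ml m
    = (A ◁ (β_ A A).inv) ≫ wl t₁ ≫ (A ◁ (β_ A A).hom) ≫ ml m
  /-- Axiom V -/
  ax5 : (A ◁ t₁) ≫ wl e₁ = wl e₁ ≫ (A ◁ t₁)
  /-- Axiom VI -/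
  ax6 : wl t₁ ≫ (A ◁ e₁)
    = (A ◁ (β_ A A).inv) ≫ wl e₁ ≫ (A ◁ (β_ A A).hom) ≫ wl t₁
  /-- Axiom VII -/
  ax7 : wl t₁ ≫ (A ◁ ((j ▷ A) ≫ (λ_ A).hom)) ≫ m
    = (A ◁ (β_ A A).hom) ≫ (A ◁ e₁) ≫ (A ◁ ((A ◁ j) ≫ (ρ_ A).hom)) ≫ m
  /-- Axiom VIII -/
  ax8 : wl t₁ ≫ (A ◁ (β_ A A).hom) ≫ ml m ≫ (j ▷ A) ≫ (λ_ A).hom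
    = (A ◁ (β_ A A).hom) ≫ (A ◁ e₁) ≫ (A ◁ ((j ▷ A) ≫ (λ_ A).hom)) ≫ m

namespace RWMB

variable {A : C} {𝒴 : Set C} (S : RWMB A 𝒴)

/-- `⊓ᴸ₁ := (j ⊗ 1) ∘ e₁`. -/
def piL1 : A ⊗ A ⟶ A := S.e₁ ≫ (S.j ▷ A) ≫ (λ_ A).hom

/-- `⊓ᴸ₂ := (j ⊗ 1) ∘ t₄ ∘ c`. -/
def piL2 : A ⊗ A ⟶ A := (β_ A A).hom ≫ S.t₄ ≫ (S.j ▷ A) ≫ (λ_ A).hom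

/-- `⊓̄ᴿ₁ ∘ c⁻¹ = (1 ⊗ j) ∘ e₁`, the second leg of the coequalizer defining the base
object. -/
def piBarR1c : A ⊗ A ⟶ A := S.e₁ ≫ (A ◁ S.j) ≫ (ρ_ A).hom

end RWMB

/-! Sweedler-style, `e₁ (a ⊗ b) = E (a ⊗ b)` for a formal idempotent `E = 1₁ ⊗ 1₂`, so that
`⊓ᴸ₁ (a ⊗ b) = ⊓ᴸ a · b` with `⊓ᴸ a = j (1₁ a) 1₂`, and `p` is a formal version of `⊓ᴸ` as a map
onto its image. None of these formal elements lives in `A`, so every identity between them is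
tested by multiplying with elements of `A`. The product `μ` descends from
`⊓ᴸ (⊓ᴸ a · b) = ⊓ᴸ a · ⊓ᴸ b`. For the coproduct, `(p ⊗ 1) ∘ t₁` is first factorized through `m`,
giving a coaction `A ⟶ L ⊗ A`: under the injective test map built from `n₁` and `m` it becomes
`1 ⊗ 1 ⊗ m` followed by a morphism. Left `L`-linearity of that coaction, which is tested in the
same way, makes `1 ⊗ p` after it descend along `p` to `δ`. -/

section Whiskering

variable {D : Type u} [Category.{v} D] [MonoidalCategory D]

/-- `f ⊗ 1_Z`, for `f` with two tensor factors in source and target, between right-bracketed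
products. Working with these morphisms keeps associators out of the calculations. -/
def whiskerRight₂₂ {X Y U V : D} (f : X ⊗ Y ⟶ U ⊗ V) (Z : D) : X ⊗ Y ⊗ Z ⟶ U ⊗ V ⊗ Z :=
  (α_ X Y Z).inv ≫ f ▷ Z ≫ (α_ U V Z).hom

/-- `f ⊗ 1_Z`, for `f` with two tensor factors in the source and one in the target, with
right-bracketed source. -/
def whiskerRight₂₁ {X Y U : D} (f : X ⊗ Y ⟶ U) (Z : D) : X ⊗ Y ⊗ Z ⟶ U ⊗ Z :=
  (α_ X Y Z).inv ≫ f ▷ Z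

/-- `f ⊗ 1_Z`, for `f` with three tensor factors in the source and one in the target, with
right-bracketed source. -/
def whiskerRight₃₁ {X Y W U : D} (f : X ⊗ Y ⊗ W ⟶ U) (Z : D) : X ⊗ Y ⊗ W ⊗ Z ⟶ U ⊗ Z :=
  X ◁ (α_ Y W Z).inv ≫ (α_ X (Y ⊗ W) Z).inv ≫ f ▷ Z

/-- `f ⊗ 1_Z` for `f` with target the monoidal unit, composed with the left unitor. -/
def whiskerRight₁₀ {X : D} (f : X ⟶ 𝟙_ D) (Z : D) : X ⊗ Z ⟶ Z := f ▷ Z ≫ (λ_ Z).hom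

/-- `1_X ⊗ f` for `f` with target the monoidal unit, composed with the right unitor. -/
def whiskerLeft₁₀ (X : D) {Y : D} (f : Y ⟶ 𝟙_ D) : X ⊗ Y ⟶ X := X ◁ f ≫ (ρ_ X).hom

end Whiskering

local infixl:81 " ▷₂₂ " => whiskerRight₂₂
local infixl:81 " ▷₂₁ " => whiskerRight₂₁
local infixl:81 " ▷₃₁ " => whiskerRight₃₁
local infixl:81 " ▷₁₀ " => whiskerRight₁₀
local infixr:81 " ◁₁₀ " => whiskerLeft₁₀

section WhiskerExchange

variable {D : Type u} [Category.{v} D] [MonoidalCategory D] {X Y U V W Z Z' : D}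

lemma whisker_exchange₂₂ (f : X ⊗ Y ⟶ U ⊗ V) (g : Z ⟶ Z') :
    X ◁ Y ◁ g ≫ f ▷₂₂ Z' = f ▷₂₂ Z ≫ U ◁ V ◁ g := by
  simp only [whiskerRight₂₂, assoc]
  rw [← associator_naturality_right, ← whisker_exchange_assoc,
    associator_inv_naturality_right_assoc]

lemma whisker_exchange₂₁ (f : X ⊗ Y ⟶ U) (g : Z ⟶ Z') :
    X ◁ Y ◁ g ≫ f ▷₂₁ Z' = f ▷₂₁ Z ≫ U ◁ g := by
  simp only [whiskerRight₂₁, assoc]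
  rw [← whisker_exchange, associator_inv_naturality_right_assoc]

lemma whisker_exchange₁₀ (f : X ⟶ 𝟙_ D) (g : Z ⟶ Z') : X ◁ g ≫ f ▷₁₀ Z' = f ▷₁₀ Z ≫ g := by
  simp only [whiskerRight₁₀, assoc]
  rw [whisker_exchange_assoc, leftUnitor_naturality]

lemma comp_whiskerRight₂₂ {P Q : D} (f : X ⊗ Y ⟶ U ⊗ V) (g : U ⊗ V ⟶ P ⊗ Q) (Z : D) :
    (f ≫ g) ▷₂₂ Z = f ▷₂₂ Z ≫ g ▷₂₂ Z := by
  simp [whiskerRight₂₂]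

lemma comp_whiskerRight₂₁ (f : X ⊗ Y ⟶ U ⊗ V) (g : U ⊗ V ⟶ W) (Z : D) :
    (f ≫ g) ▷₂₁ Z = f ▷₂₂ Z ≫ g ▷₂₁ Z := by
  simp [whiskerRight₂₂, whiskerRight₂₁]

lemma whiskerLeft_comp_whiskerRight₂₁ (f : Z ⟶ Y) (g : X ⊗ Y ⟶ W) (P : D) :
    (X ◁ f ≫ g) ▷₂₁ P = X ◁ f ▷ P ≫ g ▷₂₁ P := by
  simp [whiskerRight₂₁]

lemma whiskerRight₁₀_whiskerRight₂₁ (f : X ⊗ Y ⟶ U ⊗ V) (j : U ⟶ 𝟙_ D) (Z : D) :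
    (f ≫ j ▷₁₀ V) ▷₂₁ Z = f ▷₂₂ Z ≫ j ▷₁₀ (V ⊗ Z) := by
  simp [whiskerRight₂₂, whiskerRight₂₁, whiskerRight₁₀]

lemma whiskerLeft₁₀_whiskerRight₂₁ (f : X ⊗ Y ⟶ U ⊗ V) (j : V ⟶ 𝟙_ D) (Z : D) :
    (f ≫ U ◁₁₀ j) ▷₂₁ Z = f ▷₂₂ Z ≫ U ◁ j ▷₁₀ Z := by
  simp [whiskerRight₂₂, whiskerRight₂₁, whiskerRight₁₀, whiskerLeft₁₀]

lemma whiskerLeft₁₀_comp (j : X ⟶ 𝟙_ D) (k : Y ⟶ 𝟙_ D) : X ◁₁₀ k ≫ j = j ▷₁₀ Y ≫ k := by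
  rw [← whisker_exchange₁₀, whiskerLeft₁₀, whiskerRight₁₀, assoc, ← rightUnitor_naturality,
    unitors_equal]

lemma comp_whiskerLeft₁₀ (f : Z ⟶ Y) (k : Y ⟶ 𝟙_ D) : X ◁₁₀ (f ≫ k) = X ◁ f ≫ X ◁₁₀ k := by
  simp [whiskerLeft₁₀]

instance epi_whiskerLeft_whiskerRight₂₁ (f : X ⊗ Y ⟶ U) [Epi (W ◁ f ▷ Z)] :
    Epi (W ◁ f ▷₂₁ Z) := by
  rw [whiskerRight₂₁, whiskerLeft_comp]
  infer_instance

end WhiskerExchange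

section RegularEpi

variable {D : Type u} [Category.{v} D]

instance isRegularEpi_map {E : Type*} [Category* E] (G : D ⥤ E)
    [PreservesColimitsOfShape WalkingParallelPair G] {X Y : D} (f : X ⟶ Y) [IsRegularEpi f] :
    IsRegularEpi (G.map f) :=
  isRegularEpi_of_regularEpi <| Cofork.IsColimit.regularEpi <|
    isColimitCoforkMapOfIsColimit G (IsRegularEpi.w f) (IsRegularEpi.isColimit f)

variable [MonoidalCategory D] {X Y : D} (f : X ⟶ Y) [IsRegularEpi f] (Z : D)

instance isRegularEpi_whiskerLeft
    [PreservesColimitsOfShape WalkingParallelPair (tensorLeft Z)] : IsRegularEpi (Z ◁ f) :=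
  isRegularEpi_map (tensorLeft Z) f

instance isRegularEpi_whiskerRight
    [PreservesColimitsOfShape WalkingParallelPair (tensorRight Z)] : IsRegularEpi (f ▷ Z) :=
  isRegularEpi_map (tensorRight Z) f

end RegularEpi

section Braiding

variable {X Y U V A B : C}

lemma braiding_whiskerRight₂₂_hom_inv (X Y Z : C) :
    (β_ X Y).hom ▷₂₂ Z ≫ (β_ X Y).inv ▷₂₂ Z = 𝟙 _ := by
  simp [whiskerRight₂₂]

lemma braiding_whiskerRight₂₂_inv_hom (X Y Z : C) :
    (β_ X Y).inv ▷₂₂ Z ≫ (β_ X Y).hom ▷₂₂ Z = 𝟙 _ := by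
  simp [whiskerRight₂₂]

lemma braiding_inv_whiskerLeft₁₀ (j : A ⟶ 𝟙_ C) (X : C) : (β_ X A).inv ≫ X ◁₁₀ j = j ▷₁₀ X := by
  rw [whiskerLeft₁₀, whiskerRight₁₀, ← BraidedCategory.braiding_inv_naturality_left_assoc]
  simp

lemma braiding_inv_whiskerRight₁₀ (j : A ⟶ 𝟙_ C) (X : C) :
    (β_ A X).inv ≫ j ▷₁₀ X = X ◁₁₀ j := by
  rw [whiskerLeft₁₀, whiskerRight₁₀, ← BraidedCategory.braiding_inv_naturality_right_assoc]
  simp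

lemma whiskerRight₂₁_braiding (f : X ⊗ Y ⟶ B) (A : C) :
    f ▷₂₁ A ≫ (β_ B A).hom = X ◁ (β_ Y A).hom ≫ (β_ X A).hom ▷₂₂ Y ≫ A ◁ f := by
  simp [whiskerRight₂₁, whiskerRight₂₂]

lemma whiskerRight₂₁_braiding_inv (f : X ⊗ Y ⟶ B) (A : C) :
    f ▷₂₁ A ≫ (β_ A B).inv = X ◁ (β_ A Y).inv ≫ (β_ A X).inv ▷₂₂ Y ≫ A ◁ f := by
  simp [whiskerRight₂₁, whiskerRight₂₂]

lemma whiskerLeft_braiding (f : X ⊗ Y ⟶ B) (A : C) :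
    A ◁ f ≫ (β_ A B).hom = (β_ A X).hom ▷₂₂ Y ≫ X ◁ (β_ A Y).hom ≫ f ▷₂₁ A := by
  simp [whiskerRight₂₁, whiskerRight₂₂]

lemma braiding_inv_whiskerRight₂₂ (f : X ⊗ Y ⟶ U ⊗ V) (A : C) :
    (β_ X A).inv ▷₂₂ Y ≫ X ◁ (β_ Y A).inv ≫ f ▷₂₂ A =
      A ◁ f ≫ (β_ U A).inv ▷₂₂ V ≫ U ◁ (β_ V A).inv := by
  simpa [whiskerRight₂₂] using
    (BraidedCategory.braiding_inv_naturality_right A f =≫ (α_ U V A).hom).symm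

lemma yang_baxter₂₂ (A : C) :
    (β_ A A).hom ▷₂₂ A ≫ A ◁ (β_ A A).hom ≫ (β_ A A).hom ▷₂₂ A =
      A ◁ (β_ A A).hom ≫ (β_ A A).hom ▷₂₂ A ≫ A ◁ (β_ A A).hom := by
  simpa [whiskerRight₂₂] using BraidedCategory.yang_baxter A A A

lemma yang_baxter₂₂_inv (A : C) :
    (β_ A A).inv ▷₂₂ A ≫ A ◁ (β_ A A).inv ≫ (β_ A A).inv ▷₂₂ A =
      A ◁ (β_ A A).inv ≫ (β_ A A).inv ▷₂₂ A ≫ A ◁ (β_ A A).inv := by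
  simpa [whiskerRight₂₂] using congrArg Iso.inv (BraidedCategory.yang_baxter_iso A A A)

end Braiding

section NonDegeneracy

section Left

variable {D : Type u} [Category.{v} D] [MonoidalCategory D]
  {𝒴 : Set D} {X Y Z V W : D} {v : Z ⊗ V ⟶ W}

lemma NdLeftOn.cancel (hv : NdLeftOn v 𝒴) (hY : Y ∈ 𝒴) {g h : X ⟶ V ⊗ Y}
    (e : Z ◁ g ≫ v ▷₂₁ Y = Z ◁ h ≫ v ▷₂₁ Y) : g = h :=
  hv X Y hY e

lemma NdLeftOn.cancel_unit (hv : NdLeftOn v 𝒴) (hI : 𝟙_ D ∈ 𝒴) {g h : X ⟶ V}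
    (e : Z ◁ g ≫ v = Z ◁ h ≫ v) : g = h := by
  have padded (k : X ⟶ V) :
      Z ◁ (k ≫ (ρ_ V).inv) ≫ v ▷₂₁ 𝟙_ D = Z ◁ k ≫ v ≫ (ρ_ W).inv := by
    simp [whiskerRight₂₁]
  rw [← cancel_mono (ρ_ V).inv]
  apply hv.cancel hI
  rw [padded, padded, reassoc_of% e]

end Left

variable {𝒴 : Set C} {X Y Z V W : C} {v : Z ⊗ V ⟶ W}

lemma NdRightOn.cancel (hv : NdRightOn v 𝒴) (hY : Y ∈ 𝒴) {g h : X ⟶ Y ⊗ Z}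
    (e : g ▷ V ≫ (α_ Y Z V).hom ≫ Y ◁ v = h ▷ V ≫ (α_ Y Z V).hom ≫ Y ◁ v) : g = h := by
  have rotated (k : X ⟶ Y ⊗ Z) :
      (V ◁ (k ≫ (β_ Z Y).inv) ≫ ((β_ V Z).hom ≫ v) ▷₂₁ Y) ≫ (β_ W Y).hom =
        (β_ V X).hom ≫ k ▷ V ≫ (α_ Y Z V).hom ≫ Y ◁ v := by
    rw [assoc, whiskerRight₂₁_braiding]
    simpa [whiskerRight₂₂] using
      BraidedCategory.braiding_naturality_right_assoc V k ((α_ Y Z V).hom ≫ Y ◁ v)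
  rw [← cancel_mono (β_ Z Y).inv]
  apply NdLeftOn.cancel hv hY
  rw [← cancel_mono (β_ W Y).hom, rotated, rotated, e]

lemma NdRightOn.cancel_unit (hv : NdRightOn v 𝒴) (hI : 𝟙_ C ∈ 𝒴) {g h : X ⟶ Z}
    (e : g ▷ V ≫ v = h ▷ V ≫ v) : g = h := by
  apply NdLeftOn.cancel_unit hv hI
  rw [BraidedCategory.braiding_naturality_right_assoc,
    BraidedCategory.braiding_naturality_right_assoc, e]

end NonDegeneracy

/-- The part of a regular weak multiplier bimonoid on which the structure of its base object
rests: a weakly counital fusion morphism `(t₁, e₁, j)`, here with axioms I, III and V–VIII only,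
together with a companion `t₂` related to `t₁` by (c12) and by the interchange relation, and with
non-degenerate multiplication. -/
structure FusionPair (A : C) (𝒴 : Set C) where
  t₁ : A ⊗ A ⟶ A ⊗ A
  t₂ : A ⊗ A ⟶ A ⊗ A
  e₁ : A ⊗ A ⟶ A ⊗ A
  j : A ⟶ 𝟙_ C
  m : A ⊗ A ⟶ A
  m_eq : m = t₁ ≫ j ▷₁₀ A
  memI : 𝟙_ C ∈ 𝒴
  memA : A ∈ 𝒴
  ndl : NdLeftOn m 𝒴
  ndr : NdRightOn m 𝒴
  c12 : A ◁ t₁ ≫ m ▷₂₁ A = t₂ ▷₂₂ A ≫ A ◁ m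
  interchange : A ◁ t₁ ≫ t₂ ▷₂₂ A = t₂ ▷₂₂ A ≫ A ◁ t₁
  axI : A ◁ t₁ ≫ (β_ A A).hom ▷₂₂ A ≫ A ◁ t₁ ≫ (β_ A A).inv ▷₂₂ A ≫ t₁ ▷₂₂ A =
    t₁ ▷₂₂ A ≫ A ◁ t₁
  axIII : t₁ ≫ e₁ = t₁
  axV : A ◁ t₁ ≫ e₁ ▷₂₂ A = e₁ ▷₂₂ A ≫ A ◁ t₁
  axVI : t₁ ▷₂₂ A ≫ A ◁ e₁ =
    A ◁ (β_ A A).inv ≫ e₁ ▷₂₂ A ≫ A ◁ (β_ A A).hom ≫ t₁ ▷₂₂ A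
  axVII : t₁ ▷₂₂ A ≫ A ◁ j ▷₁₀ A ≫ m = A ◁ (β_ A A).hom ≫ A ◁ e₁ ≫ A ◁ (A ◁₁₀ j) ≫ m
  axVIII : t₁ ▷₂₂ A ≫ A ◁ (β_ A A).hom ≫ m ▷₂₁ A ≫ j ▷₁₀ A =
    A ◁ (β_ A A).hom ≫ A ◁ e₁ ≫ A ◁ j ▷₁₀ A ≫ m

/-- Forgets `t₃`, `t₄` and `e₂`. -/
def RWMB.toFusionPair {A : C} {𝒴 : Set C} (S : RWMB A 𝒴) : FusionPair A 𝒴 where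
  t₁ := S.t₁
  t₂ := S.t₂
  e₁ := S.e₁
  j := S.j
  m := S.m
  m_eq := S.hm₁
  memI := S.memI
  memA := S.memA
  ndl := S.ndl
  ndr := S.ndr
  c12 := S.hc12
  interchange := S.hi21
  axI := S.ax1
  axIII := S.ax3
  axV := S.ax5
  axVI := S.ax6
  axVII := S.ax7
  axVIII := S.ax8

namespace FusionPair

variable {A : C} {𝒴 : Set C} (S : FusionPair A 𝒴)

section Projections

/-- `⊓ᴸ₁ = (j ⊗ 1) ∘ e₁`, informally `a ⊗ b ↦ ⊓ᴸ(a) b`. -/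
def piL1 : A ⊗ A ⟶ A := S.e₁ ≫ S.j ▷₁₀ A

/-- `⊓ᴸ₁ ∘ c`, informally `a ⊗ b ↦ ⊓ᴸ(b) a`. -/
def piL1c : A ⊗ A ⟶ A := (β_ A A).hom ≫ S.piL1

/-- `⊓̄ᴿ₁ ∘ c⁻¹ = (1 ⊗ j) ∘ e₁`, informally `a ⊗ b ↦ ⊓̄ᴿ(b) a`. -/
def piBarR1c : A ⊗ A ⟶ A := S.e₁ ≫ A ◁₁₀ S.j

/-- `⊓̄ᴿ₁ = (1 ⊗ j) ∘ e₁ ∘ c`, informally `a ⊗ b ↦ ⊓̄ᴿ(a) b`. -/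
def piBarR1 : A ⊗ A ⟶ A := (β_ A A).hom ≫ S.piBarR1c

/-- `⊓̄ᴿ₂ = (1 ⊗ j) ∘ t₁`, informally `a ⊗ b ↦ a ⊓̄ᴿ(b)`. -/
def piBarR2 : A ⊗ A ⟶ A := S.t₁ ≫ A ◁₁₀ S.j

/-- `⊓̄ᴸ₁ = (j ⊗ 1) ∘ t₂`, informally `a ⊗ b ↦ ⊓̄ᴸ(a) b`. -/
def piBarL1 : A ⊗ A ⟶ A := S.t₂ ≫ S.j ▷₁₀ A

/-- `t₁` with the two factors of its target exchanged. Many identities are simplest for this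
morphism, since it is multiplicative in its second argument without further braidings; see
`m_flipT`. -/
def flipT : A ⊗ A ⟶ A ⊗ A := S.t₁ ≫ (β_ A A).inv

/-- `t₁` acting on the first and the third of three factors. -/
def t₁₃ : A ⊗ A ⊗ A ⟶ A ⊗ A ⊗ A := (β_ A A).hom ▷₂₂ A ≫ A ◁ S.t₁ ≫ (β_ A A).inv ▷₂₂ A

/-- `e₁` acting on the first and the third of three factors. -/
def e₁₃ : A ⊗ A ⊗ A ⟶ A ⊗ A ⊗ A := A ◁ (β_ A A).inv ≫ S.e₁ ▷₂₂ A ≫ A ◁ (β_ A A).hom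

lemma m_eq_flipT : S.m = S.flipT ≫ A ◁₁₀ S.j := by
  rw [flipT, assoc, braiding_inv_whiskerLeft₁₀, ← m_eq]

lemma piBarR2_eq_flipT : S.piBarR2 = S.flipT ≫ S.j ▷₁₀ A := by
  rw [flipT, assoc, braiding_inv_whiskerRight₁₀, ← piBarR2]

lemma m_whiskerRight (Z : C) : S.m ▷₂₁ Z = S.t₁ ▷₂₂ Z ≫ S.j ▷₁₀ (A ⊗ Z) := by
  rw [m_eq, whiskerRight₁₀_whiskerRight₂₁]

lemma piBarR2_whiskerRight (Z : C) : S.piBarR2 ▷₂₁ Z = S.t₁ ▷₂₂ Z ≫ A ◁ S.j ▷₁₀ Z := by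
  rw [piBarR2, whiskerLeft₁₀_whiskerRight₂₁]

lemma piBarR2_whiskerRight_eq_flipT (Z : C) :
    S.piBarR2 ▷₂₁ Z = S.flipT ▷₂₂ Z ≫ S.j ▷₁₀ (A ⊗ Z) := by
  rw [piBarR2_eq_flipT, whiskerRight₁₀_whiskerRight₂₁]

lemma piL1_whiskerRight (Z : C) : S.piL1 ▷₂₁ Z = S.e₁ ▷₂₂ Z ≫ S.j ▷₁₀ (A ⊗ Z) := by
  rw [piL1, whiskerRight₁₀_whiskerRight₂₁]

lemma piBarR1c_whiskerRight (Z : C) : S.piBarR1c ▷₂₁ Z = S.e₁ ▷₂₂ Z ≫ A ◁ S.j ▷₁₀ Z := by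
  rw [piBarR1c, whiskerLeft₁₀_whiskerRight₂₁]

lemma t₁_piL1 : S.t₁ ≫ S.piL1 = S.m := by
  rw [piL1, reassoc_of% S.axIII, ← m_eq]

lemma t₁_piBarR1c : S.t₁ ≫ S.piBarR1c = S.piBarR2 := by
  rw [piBarR1c, reassoc_of% S.axIII, ← piBarR2]

lemma flipT_piL1c : S.flipT ≫ S.piL1c = S.m := by
  rw [flipT, piL1c, assoc, Iso.inv_hom_id_assoc, t₁_piL1]

lemma piL1_j : S.piL1 ≫ S.j = S.piBarR1c ≫ S.j := by
  rw [piL1, piBarR1c, assoc, assoc, whiskerLeft₁₀_comp]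

end Projections

section Counit

lemma whiskerLeft_piL1c_m : A ◁ S.piL1c ≫ S.m =
    S.t₁ ▷₂₂ A ≫ A ◁ (β_ A A).hom ≫ S.m ▷₂₁ A ≫ S.j ▷₁₀ A := by
  simpa only [piL1c, piL1, whiskerLeft_comp, assoc] using S.axVIII.symm

lemma whiskerLeft_piL1c_m_eq_flipT :
    A ◁ S.piL1c ≫ S.m = S.flipT ▷₂₂ A ≫ A ◁ S.m ≫ A ◁₁₀ S.j := by
  rw [whiskerLeft_piL1c_m, ← braiding_inv_whiskerLeft₁₀,
    reassoc_of% (whiskerRight₂₁_braiding_inv S.m A), whiskerLeft_hom_inv_assoc, flipT,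
    comp_whiskerRight₂₂, assoc]

lemma whiskerLeft_piL1c_m_whiskerRight (Z : C) :
    A ◁ S.piL1c ▷₂₁ Z ≫ S.m ▷₂₁ Z =
      S.flipT ▷₂₂ (A ⊗ Z) ≫ A ◁ S.m ▷₂₁ Z ≫ A ◁ S.j ▷₁₀ Z := by
  simpa [whiskerRight₃₁, whiskerRight₂₂, whiskerRight₂₁, whiskerRight₁₀, whiskerLeft₁₀] using
    congrArg (· ▷₃₁ Z) S.whiskerLeft_piL1c_m_eq_flipT

lemma piBarR2_m : S.piBarR2 ▷₂₁ A ≫ S.m = A ◁ S.piBarR1 ≫ S.m := by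
  rw [piBarR2_whiskerRight]
  simpa only [piBarR1, piBarR1c, whiskerLeft_comp, assoc] using S.axVII

lemma whiskerLeft_piL1c_m_j : A ◁ S.piL1c ≫ S.m ≫ S.j = A ◁ S.piBarR1 ≫ S.m ≫ S.j := by
  rw [reassoc_of% S.whiskerLeft_piL1c_m_eq_flipT, ← reassoc_of% S.piBarR2_m,
    piBarR2_whiskerRight_eq_flipT, assoc, ← whiskerLeft₁₀_comp, comp_whiskerLeft₁₀, assoc]

lemma whiskerLeft_piL1_m_j : A ◁ S.piL1 ≫ S.m ≫ S.j = A ◁ S.piBarR1c ≫ S.m ≫ S.j := by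
  simpa [piL1c, piBarR1] using A ◁ (β_ A A).inv ≫= S.whiskerLeft_piL1c_m_j

lemma whiskerLeft_piL1_m_j_whiskerRight (Z : C) :
    A ◁ S.piL1 ▷₂₁ Z ≫ S.m ▷₂₁ Z ≫ S.j ▷₁₀ Z =
      A ◁ S.piBarR1c ▷₂₁ Z ≫ S.m ▷₂₁ Z ≫ S.j ▷₁₀ Z := by
  simpa [whiskerRight₃₁, whiskerRight₂₁, whiskerRight₁₀] using
    congrArg (· ▷₃₁ Z) S.whiskerLeft_piL1_m_j =≫ (λ_ Z).hom

lemma whiskerLeft_m_m_j_whiskerRight (Z : C) :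
    A ◁ S.m ▷₂₁ Z ≫ S.m ▷₂₁ Z ≫ S.j ▷₁₀ Z =
      A ◁ S.piBarR2 ▷₂₁ Z ≫ S.m ▷₂₁ Z ≫ S.j ▷₁₀ Z := by
  rw [← t₁_piBarR1c, comp_whiskerRight₂₁, whiskerLeft_comp_assoc,
    ← whiskerLeft_piL1_m_j_whiskerRight, ← whiskerLeft_comp_assoc, ← comp_whiskerRight₂₁, t₁_piL1]

end Counit

section Multiplication

lemma t₁₃_t₁ : A ◁ S.t₁ ≫ S.t₁₃ ≫ S.t₁ ▷₂₂ A = S.t₁ ▷₂₂ A ≫ A ◁ S.t₁ := by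
  simpa only [t₁₃, assoc] using S.axI

lemma m_t₁ : S.m ▷₂₁ A ≫ S.t₁ = A ◁ S.t₁ ≫ S.t₁₃ ≫ S.m ▷₂₁ A := by
  rw [m_whiskerRight, reassoc_of% S.t₁₃_t₁, assoc, whisker_exchange₁₀]

lemma m_flipT : S.m ▷₂₁ A ≫ S.flipT = A ◁ S.flipT ≫ S.flipT ▷₂₂ A ≫ A ◁ S.m := by
  have past_strand : A ◁ (β_ A A).inv ≫ S.flipT ▷₂₂ A =
      (β_ A A).hom ▷₂₂ A ≫ A ◁ S.flipT ≫ (β_ A A).inv ▷₂₂ A ≫ A ◁ (β_ A A).inv := by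
    rw [← braiding_inv_whiskerRight₂₂, reassoc_of% braiding_whiskerRight₂₂_hom_inv]
  have flipT_eq {P : C} (g : A ⊗ A ⊗ A ⟶ P) :
      A ◁ S.flipT ≫ g = A ◁ S.t₁ ≫ A ◁ (β_ A A).inv ≫ g := by
    rw [flipT, whiskerLeft_comp_assoc]
  rw [flipT_eq, reassoc_of% past_strand, flipT_eq, ← reassoc_of% yang_baxter₂₂_inv,
    ← whiskerRight₂₁_braiding_inv]
  simp only [flipT, reassoc_of% S.m_t₁, t₁₃, assoc]

lemma m_assoc : A ◁ S.m ≫ S.m = S.m ▷₂₁ A ≫ S.m :=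
  calc
    A ◁ S.m ≫ S.m = A ◁ S.flipT ≫ A ◁ S.piL1c ≫ S.m := by
      rw [← whiskerLeft_comp_assoc, flipT_piL1c]
    _ = A ◁ S.flipT ≫ S.flipT ▷₂₂ A ≫ A ◁ S.m ≫ A ◁₁₀ S.j := by
      rw [whiskerLeft_piL1c_m_eq_flipT]
    _ = S.m ▷₂₁ A ≫ S.m := by
      rw [← reassoc_of% S.m_flipT, ← m_eq_flipT]

end Multiplication

section Linearity

lemma c12_whiskerRight (Z : C) :
    A ◁ S.t₁ ▷₂₂ Z ≫ S.m ▷₂₁ (A ⊗ Z) = S.t₂ ▷₂₂ (A ⊗ Z) ≫ A ◁ S.m ▷₂₁ Z := by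
  simpa [whiskerRight₃₁, whiskerRight₂₂, whiskerRight₂₁] using
    congrArg (· ▷₃₁ Z) S.c12 =≫ (α_ A A Z).hom

lemma interchange_whiskerRight (Z : C) :
    A ◁ S.t₁ ▷₂₂ Z ≫ S.t₂ ▷₂₂ (A ⊗ Z) = S.t₂ ▷₂₂ (A ⊗ Z) ≫ A ◁ S.t₁ ▷₂₂ Z := by
  simpa [whiskerRight₃₁, whiskerRight₂₂] using
    congrArg (· ▷₃₁ Z) S.interchange =≫ ((α_ A (A ⊗ A) Z).hom ≫ A ◁ (α_ A A Z).hom)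

lemma whiskerLeft_m_t₁ : A ◁ S.m ≫ S.t₁ = S.t₁ ▷₂₂ A ≫ A ◁ S.m := by
  apply S.ndl.cancel S.memA
  calc
    A ◁ (A ◁ S.m ≫ S.t₁) ≫ S.m ▷₂₁ A = S.t₂ ▷₂₂ (A ⊗ A) ≫ A ◁ A ◁ S.m ≫ A ◁ S.m := by
      rw [whiskerLeft_comp_assoc, c12, reassoc_of% whisker_exchange₂₂]
    _ = S.t₂ ▷₂₂ (A ⊗ A) ≫ A ◁ S.m ▷₂₁ A ≫ A ◁ S.m := by
      rw [← whiskerLeft_comp, m_assoc, whiskerLeft_comp]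
    _ = A ◁ (S.t₁ ▷₂₂ A ≫ A ◁ S.m) ≫ S.m ▷₂₁ A := by
      rw [← reassoc_of% S.c12_whiskerRight, ← whisker_exchange₂₁, whiskerLeft_comp_assoc]

lemma whiskerLeft_piL1c_t₁ :
    A ◁ S.piL1c ≫ S.t₁ = S.t₁ ▷₂₂ A ≫ A ◁ (β_ A A).hom ≫ S.piBarR2 ▷₂₁ A := by
  apply S.ndl.cancel S.memA
  calc
    A ◁ (A ◁ S.piL1c ≫ S.t₁) ≫ S.m ▷₂₁ A =
        S.t₂ ▷₂₂ (A ⊗ A) ≫ A ◁ (A ◁ S.piL1c ≫ S.m) := by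
      rw [whiskerLeft_comp_assoc, c12, reassoc_of% whisker_exchange₂₂, whiskerLeft_comp]
    _ = A ◁ S.t₁ ▷₂₂ A ≫ S.t₂ ▷₂₂ (A ⊗ A) ≫ A ◁ A ◁ (β_ A A).hom ≫ A ◁ S.m ▷₂₁ A ≫
        A ◁ S.j ▷₁₀ A := by
      rw [whiskerLeft_piL1c_m, reassoc_of% S.interchange_whiskerRight]
      simp only [whiskerLeft_comp]
    _ = A ◁ S.t₁ ▷₂₂ A ≫ A ◁ A ◁ (β_ A A).hom ≫ A ◁ S.t₁ ▷₂₂ A ≫ A ◁ A ◁ S.j ▷₁₀ A ≫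
        S.m ▷₂₁ A := by
      rw [← reassoc_of% whisker_exchange₂₂ S.t₂, ← reassoc_of% S.c12_whiskerRight,
        ← whisker_exchange₂₁]
    _ = A ◁ (S.t₁ ▷₂₂ A ≫ A ◁ (β_ A A).hom ≫ S.piBarR2 ▷₂₁ A) ≫ S.m ▷₂₁ A := by
      rw [piBarR2_whiskerRight]
      simp only [whiskerLeft_comp, assoc]

lemma whiskerLeft_piL1c_flipT : A ◁ S.piL1c ≫ S.flipT = S.flipT ▷₂₂ A ≫ A ◁ S.piBarR2 := by
  rw [flipT, reassoc_of% S.whiskerLeft_piL1c_t₁, whiskerRight₂₁_braiding_inv,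
    whiskerLeft_hom_inv_assoc, comp_whiskerRight₂₂, assoc]

lemma whiskerLeft_piL1c_flipT_whiskerRight (Z : C) :
    A ◁ S.piL1c ▷₂₁ Z ≫ S.flipT ▷₂₂ Z = S.flipT ▷₂₂ (A ⊗ Z) ≫ A ◁ S.piBarR2 ▷₂₁ Z := by
  simpa [whiskerRight₃₁, whiskerRight₂₂, whiskerRight₂₁] using
    congrArg (· ▷₃₁ Z) S.whiskerLeft_piL1c_flipT =≫ (α_ A A Z).hom

lemma piL1c_piL1c : S.piL1c ▷₂₁ A ≫ S.piL1c = A ◁ S.piL1c ≫ S.piL1c := by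
  apply S.ndl.cancel_unit S.memI
  calc
    A ◁ (S.piL1c ▷₂₁ A ≫ S.piL1c) ≫ S.m =
        A ◁ S.piL1c ▷₂₁ A ≫ S.flipT ▷₂₂ A ≫ A ◁ S.m ≫ A ◁₁₀ S.j := by
      rw [whiskerLeft_comp_assoc, whiskerLeft_piL1c_m_eq_flipT]
    _ = S.flipT ▷₂₂ (A ⊗ A) ≫ A ◁₁₀ (S.piBarR2 ▷₂₁ A ≫ S.m ≫ S.j) := by
      rw [reassoc_of% S.whiskerLeft_piL1c_flipT_whiskerRight]
      simp only [comp_whiskerLeft₁₀]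
    _ = S.flipT ▷₂₂ (A ⊗ A) ≫ A ◁₁₀ (A ◁ S.piL1c ≫ S.m ≫ S.j) := by
      rw [reassoc_of% S.piBarR2_m, whiskerLeft_piL1c_m_j]
    _ = A ◁ A ◁ S.piL1c ≫ S.flipT ▷₂₂ A ≫ A ◁ S.m ≫ A ◁₁₀ S.j := by
      rw [reassoc_of% whisker_exchange₂₂]
      simp only [comp_whiskerLeft₁₀]
    _ = A ◁ (A ◁ S.piL1c ≫ S.piL1c) ≫ S.m := by
      rw [whiskerLeft_comp_assoc, whiskerLeft_piL1c_m_eq_flipT]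

lemma piL1_piL1 : S.piL1 ▷₂₁ A ≫ S.piL1 = A ◁ S.piL1 ≫ S.piL1 := by
  have h := S.piL1c_piL1c
  simp only [piL1c] at h
  rw [comp_whiskerRight₂₁, assoc, reassoc_of% whiskerRight₂₁_braiding S.piL1, whiskerLeft_comp,
    assoc, reassoc_of% whiskerLeft_braiding S.piL1, reassoc_of% yang_baxter₂₂ A] at h
  simpa only [whiskerLeft_inv_hom_assoc, reassoc_of% braiding_whiskerRight₂₂_inv_hom] using
    (A ◁ (β_ A A).inv ≫= (β_ A A).inv ▷₂₂ A ≫= A ◁ (β_ A A).inv ≫= h).symm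

lemma piBarL1_m : S.piBarL1 ▷₂₁ A ≫ S.m = A ◁ S.t₁ ≫ S.m ▷₂₁ A ≫ S.j ▷₁₀ A := by
  rw [piBarL1, whiskerRight₁₀_whiskerRight₂₁, assoc, ← whisker_exchange₁₀, reassoc_of% S.c12]

lemma piBarL1_m_whiskerRight (Z : C) :
    S.piBarL1 ▷₂₁ (A ⊗ Z) ≫ S.m ▷₂₁ Z =
      A ◁ S.t₁ ▷₂₂ Z ≫ S.m ▷₂₁ (A ⊗ Z) ≫ S.j ▷₁₀ (A ⊗ Z) := by
  simpa [whiskerRight₃₁, whiskerRight₂₂, whiskerRight₂₁, whiskerRight₁₀] using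
    congrArg (· ▷₃₁ Z) S.piBarL1_m

lemma t₁₃_piBarR2 : A ◁ S.t₁ ≫ S.t₁₃ ≫ S.piBarR2 ▷₂₁ A = S.t₁ ▷₂₂ A ≫ A ◁ S.m := by
  rw [piBarR2_whiskerRight, reassoc_of% S.t₁₃_t₁, ← whiskerLeft_comp, ← m_eq]

lemma whiskerLeft_m_piBarL1 : A ◁ S.m ≫ S.piBarL1 = S.piBarL1 ▷₂₁ A ≫ S.m := by
  apply S.ndr.cancel_unit S.memI
  suffices h : A ◁ S.m ▷₂₁ A ≫ S.piBarL1 ▷₂₁ A ≫ S.m =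
      S.piBarL1 ▷₂₁ (A ⊗ A) ≫ S.m ▷₂₁ A ≫ S.m by
    simpa [whiskerRight₂₁, cancel_epi] using
      (α_ A (A ⊗ A) A).hom ≫= A ◁ (α_ A A A).hom ≫= h
  calc
    A ◁ S.m ▷₂₁ A ≫ S.piBarL1 ▷₂₁ A ≫ S.m =
        A ◁ A ◁ S.t₁ ≫ A ◁ S.t₁₃ ≫ A ◁ S.m ▷₂₁ A ≫ S.m ▷₂₁ A ≫ S.j ▷₁₀ A := by
      rw [piBarL1_m, ← whiskerLeft_comp_assoc, m_t₁, whiskerLeft_comp_assoc,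
        whiskerLeft_comp_assoc]
    _ = A ◁ S.t₁ ▷₂₂ A ≫ A ◁ A ◁ S.m ≫ S.m ▷₂₁ A ≫ S.j ▷₁₀ A := by
      rw [whiskerLeft_m_m_j_whiskerRight, ← whiskerLeft_comp_assoc A S.t₁₃,
        ← whiskerLeft_comp_assoc, t₁₃_piBarR2, whiskerLeft_comp_assoc]
    _ = S.piBarL1 ▷₂₁ (A ⊗ A) ≫ S.m ▷₂₁ A ≫ S.m := by
      rw [reassoc_of% whisker_exchange₂₁ S.m, whisker_exchange₁₀,
        reassoc_of% S.piBarL1_m_whiskerRight]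

lemma whiskerLeft_m_piBarL1_eq_t₁ :
    A ◁ S.m ≫ S.piBarL1 = A ◁ S.t₁ ≫ S.m ▷₂₁ A ≫ S.j ▷₁₀ A := by
  rw [whiskerLeft_m_piBarL1, piBarL1_m]

lemma whiskerLeft_m_piBarL1_whiskerRight (Z : C) :
    A ◁ S.m ▷₂₁ Z ≫ S.piBarL1 ▷₂₁ Z =
      A ◁ S.t₁ ▷₂₂ Z ≫ S.m ▷₂₁ (A ⊗ Z) ≫ S.j ▷₁₀ (A ⊗ Z) := by
  simpa [whiskerRight₃₁, whiskerRight₂₂, whiskerRight₂₁, whiskerRight₁₀] using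
    congrArg (· ▷₃₁ Z) S.whiskerLeft_m_piBarL1_eq_t₁

lemma whiskerLeft_piL1_m : A ◁ S.piL1 ≫ S.m = S.t₁₃ ≫ S.m ▷₂₁ A ≫ S.j ▷₁₀ A := by
  have t₁₃_eq : S.t₁₃ = A ◁ (β_ A A).inv ≫ S.t₁ ▷₂₂ A ≫ A ◁ (β_ A A).hom := by
    rw [t₁₃, ← cancel_mono (A ◁ (β_ A A).inv), assoc, assoc, ← braiding_inv_whiskerRight₂₂,
      reassoc_of% braiding_whiskerRight₂₂_hom_inv]
    simp only [assoc, whiskerLeft_hom_inv, comp_id]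
  rw [t₁₃_eq, assoc, assoc, ← whiskerLeft_piL1c_m, piL1c, whiskerLeft_comp_assoc,
    whiskerLeft_inv_hom_assoc]

lemma whiskerLeft_piL1_m_whiskerRight (Z : C) :
    A ◁ S.piL1 ▷₂₁ Z ≫ S.m ▷₂₁ Z =
      (β_ A A).hom ▷₂₂ (A ⊗ Z) ≫ A ◁ S.t₁ ▷₂₂ Z ≫ (β_ A A).inv ▷₂₂ (A ⊗ Z) ≫
        S.m ▷₂₁ (A ⊗ Z) ≫ S.j ▷₁₀ (A ⊗ Z) := by
  simpa [t₁₃, whiskerRight₃₁, whiskerRight₂₂, whiskerRight₂₁, whiskerRight₁₀] using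
    congrArg (· ▷₃₁ Z) S.whiskerLeft_piL1_m

lemma whiskerLeft_m_piL1 : A ◁ S.m ≫ S.piL1 = S.piL1 ▷₂₁ A ≫ S.m := by
  apply S.ndl.cancel_unit S.memI
  calc
    A ◁ (A ◁ S.m ≫ S.piL1) ≫ S.m = A ◁ A ◁ S.m ≫ S.t₁₃ ≫ S.m ▷₂₁ A ≫ S.j ▷₁₀ A := by
      rw [whiskerLeft_comp_assoc, whiskerLeft_piL1_m]
    _ = (β_ A A).hom ▷₂₂ (A ⊗ A) ≫ A ◁ S.t₁ ▷₂₂ A ≫ (β_ A A).inv ▷₂₂ (A ⊗ A) ≫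
        S.m ▷₂₁ (A ⊗ A) ≫ S.j ▷₁₀ (A ⊗ A) ≫ S.m := by
      rw [t₁₃, assoc, assoc, reassoc_of% whisker_exchange₂₂, ← whiskerLeft_comp_assoc,
        whiskerLeft_m_t₁, whiskerLeft_comp_assoc, reassoc_of% whisker_exchange₂₂,
        reassoc_of% whisker_exchange₂₁, whisker_exchange₁₀]
    _ = A ◁ (S.piL1 ▷₂₁ A ≫ S.m) ≫ S.m := by
      rw [← reassoc_of% S.whiskerLeft_piL1_m_whiskerRight, whiskerLeft_comp_assoc, m_assoc]

lemma t₁_whiskerLeft_piL1 : S.t₁ ▷₂₂ A ≫ A ◁ S.piL1 = S.e₁₃ ≫ S.piBarR2 ▷₂₁ A := by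
  rw [piL1, whiskerLeft_comp, reassoc_of% S.axVI, piBarR2_whiskerRight]
  simp only [e₁₃, assoc]

lemma m_e₁ : S.m ▷₂₁ A ≫ S.e₁ = S.e₁₃ ≫ S.m ▷₂₁ A := by
  rw [m_whiskerRight, assoc, ← whisker_exchange₁₀, reassoc_of% S.axVI]
  simp only [e₁₃, assoc]

lemma piL1_t₁ : S.piL1 ▷₂₁ A ≫ S.t₁ = A ◁ S.t₁ ≫ S.piL1 ▷₂₁ A := by
  rw [piL1_whiskerRight, assoc, ← whisker_exchange₁₀, reassoc_of% S.axV]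

lemma whiskerLeft_t₁_piBarR1c : A ◁ S.t₁ ≫ S.piBarR1c ▷₂₁ A = S.e₁ ▷₂₂ A ≫ A ◁ S.m := by
  rw [piBarR1c_whiskerRight, reassoc_of% S.axV, ← whiskerLeft_comp, ← m_eq]

lemma piBarL1_piL1 [Epi (A ◁ S.m ▷ A)] :
    S.piBarL1 ▷₂₁ A ≫ S.piL1 = A ◁ S.e₁ ≫ S.m ▷₂₁ A ≫ S.j ▷₁₀ A := by
  rw [← cancel_epi (A ◁ S.m ▷₂₁ A)]
  calc
    A ◁ S.m ▷₂₁ A ≫ S.piBarL1 ▷₂₁ A ≫ S.piL1 =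
        A ◁ (S.t₁ ▷₂₂ A ≫ A ◁ S.piL1) ≫ S.m ▷₂₁ A ≫ S.j ▷₁₀ A := by
      rw [reassoc_of% S.whiskerLeft_m_piBarL1_whiskerRight, ← whisker_exchange₁₀,
        ← reassoc_of% whisker_exchange₂₁ S.m, whiskerLeft_comp_assoc]
    _ = A ◁ S.e₁₃ ≫ A ◁ S.m ▷₂₁ A ≫ S.m ▷₂₁ A ≫ S.j ▷₁₀ A := by
      rw [t₁_whiskerLeft_piL1, whiskerLeft_comp_assoc, whiskerLeft_m_m_j_whiskerRight]
    _ = A ◁ S.m ▷₂₁ A ≫ A ◁ S.e₁ ≫ S.m ▷₂₁ A ≫ S.j ▷₁₀ A := by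
      rw [← whiskerLeft_comp_assoc, ← m_e₁, whiskerLeft_comp_assoc]

lemma piBarL1_piL1_whiskerRight [Epi (A ◁ S.m ▷ A)] (Z : C) :
    S.piBarL1 ▷₂₁ (A ⊗ Z) ≫ S.piL1 ▷₂₁ Z =
      A ◁ S.e₁ ▷₂₂ Z ≫ S.m ▷₂₁ (A ⊗ Z) ≫ S.j ▷₁₀ (A ⊗ Z) := by
  simpa [whiskerRight₃₁, whiskerRight₂₂, whiskerRight₂₁, whiskerRight₁₀] using
    congrArg (· ▷₃₁ Z) S.piBarL1_piL1

lemma whiskerLeft_piL1_piBarL1 [Epi (A ◁ S.m ▷ A)] [Epi (A ◁ A ◁ S.m)] :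
    A ◁ S.piL1 ≫ S.piBarL1 = S.piBarL1 ▷₂₁ A ≫ S.piL1 := by
  rw [← cancel_epi (A ◁ A ◁ S.m)]
  calc
    A ◁ A ◁ S.m ≫ A ◁ S.piL1 ≫ S.piBarL1 =
        A ◁ (S.piL1 ▷₂₁ A ≫ S.t₁) ≫ S.m ▷₂₁ A ≫ S.j ▷₁₀ A := by
      rw [← whiskerLeft_comp_assoc, whiskerLeft_m_piL1, whiskerLeft_comp_assoc,
        whiskerLeft_m_piBarL1_eq_t₁, whiskerLeft_comp_assoc]
    _ = A ◁ A ◁ S.t₁ ≫ A ◁ S.piBarR1c ▷₂₁ A ≫ S.m ▷₂₁ A ≫ S.j ▷₁₀ A := by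
      rw [piL1_t₁, whiskerLeft_comp_assoc, whiskerLeft_piL1_m_j_whiskerRight]
    _ = A ◁ S.e₁ ▷₂₂ A ≫ A ◁ A ◁ S.m ≫ S.m ▷₂₁ A ≫ S.j ▷₁₀ A := by
      rw [← whiskerLeft_comp_assoc, whiskerLeft_t₁_piBarR1c, whiskerLeft_comp_assoc]
    _ = S.piBarL1 ▷₂₁ (A ⊗ A) ≫ A ◁ S.m ≫ S.piL1 := by
      rw [reassoc_of% whisker_exchange₂₁ S.m, whisker_exchange₁₀,
        ← reassoc_of% S.piBarL1_piL1_whiskerRight, whiskerLeft_m_piL1]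
    _ = A ◁ A ◁ S.m ≫ S.piBarL1 ▷₂₁ A ≫ S.piL1 := by
      rw [reassoc_of% whisker_exchange₂₁ S.piBarL1]

end Linearity

end FusionPair

/-- The base object `L` of a fusion pair: the coequalizer `p : A ⟶ L` of `⊓ᴸ₁` and `⊓̄ᴿ₁ ∘ c⁻¹`,
together with the morphism `n₁` that `⊓ᴸ₁` induces on `L ⊗ A`, assumed non-degenerate. -/
structure FusionPair.BaseObject {A : C} {𝒴 : Set C} (S : FusionPair A 𝒴) (L : C) where
  p : A ⟶ L
  condition : S.piL1 ≫ p = S.piBarR1c ≫ p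
  isColimit : IsColimit (Cofork.ofπ p condition)
  n₁ : L ⊗ A ⟶ A
  p_n₁ : p ▷ A ≫ n₁ = S.piL1
  mem : L ∈ 𝒴
  ndr : NdRightOn n₁ 𝒴

namespace FusionPair.BaseObject

variable {A L : C} {𝒴 : Set C} {S : FusionPair A 𝒴} (B : S.BaseObject L)

instance : IsRegularEpi B.p := isRegularEpi_of_regularEpi (Cofork.IsColimit.regularEpi B.isColimit)

section Probe

variable {X Y Z W : C}

/-- The test map by which morphisms into `L ⊗ Z` are compared, informally
`g ↦ (a ⊗ b ⊗ x ↦ a g₁(x) b ⊗ g₂(x))` where `L` acts on `A` by `n₁`. -/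
def probe (g : X ⟶ L ⊗ Z) : A ⊗ A ⊗ X ⟶ A ⊗ Z :=
  A ◁ A ◁ g ≫ A ◁ ((β_ A L).hom ≫ B.n₁) ▷₂₁ Z ≫ S.m ▷₂₁ Z

lemma probe_injective (hZ : Z ∈ 𝒴) : Function.Injective (B.probe : (X ⟶ L ⊗ Z) → _) := by
  intro g h e
  apply NdLeftOn.cancel B.ndr hZ
  apply S.ndl.cancel hZ
  simpa only [probe, whiskerLeft_comp, assoc] using e

lemma probe_comp (h : W ⟶ X) (g : X ⟶ L ⊗ Z) : B.probe (h ≫ g) = A ◁ A ◁ h ≫ B.probe g := by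
  simp only [probe, whiskerLeft_comp, assoc]

lemma probe_comp_whiskerLeft (g : X ⟶ L ⊗ Y) (h : Y ⟶ Z) :
    B.probe (g ≫ L ◁ h) = B.probe g ≫ A ◁ h := by
  simp only [probe, whiskerLeft_comp, assoc, ← whisker_exchange₂₁ S.m]
  rw [← whiskerLeft_comp_assoc A (A ◁ L ◁ h), whisker_exchange₂₁, whiskerLeft_comp_assoc]

lemma probe_whiskerRight (g : X ⟶ L ⊗ Z) (W : C) :
    B.probe (g ▷ W ≫ (α_ L Z W).hom) = B.probe g ▷₃₁ W ≫ (α_ A Z W).hom := by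
  simp only [probe, whiskerRight₃₁, whiskerRight₂₁]
  monoidal

lemma whiskerLeft_p_whiskerRight_n₁ (Z : C) :
    A ◁ B.p ▷ Z ≫ ((β_ A L).hom ≫ B.n₁) ▷₂₁ Z = S.piL1c ▷₂₁ Z := by
  rw [← whiskerLeft_comp_whiskerRight₂₁, BraidedCategory.braiding_naturality_right_assoc, B.p_n₁,
    piL1c]

lemma probe_t₁ : B.probe (S.t₁ ≫ B.p ▷ A) =
    A ◁ A ◁ S.m ≫ S.flipT ▷₂₂ A ≫ A ◁ S.piBarL1 := by
  rw [probe_comp, probe, ← whiskerLeft_comp_assoc A (A ◁ B.p ▷ A), whiskerLeft_p_whiskerRight_n₁,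
    whiskerLeft_piL1c_m_whiskerRight, reassoc_of% whisker_exchange₂₂,
    reassoc_of% whisker_exchange₂₂]
  simp only [← whiskerLeft_comp]
  rw [whiskerLeft_m_piBarL1_eq_t₁]

end Probe

section Coaction

variable [IsRegularEpi S.m]

/-- The left `L`-coaction on `A`, informally `a b ↦ (p ⊗ 1) (t₁ (a ⊗ b))`. -/
noncomputable def coaction : A ⟶ L ⊗ A :=
  IsRegularEpi.desc S.m (S.t₁ ≫ B.p ▷ A) <| by
    apply B.probe_injective S.memA
    rw [B.probe_comp (IsRegularEpi.left S.m), B.probe_comp (IsRegularEpi.right S.m), probe_t₁]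
    simp only [← whiskerLeft_comp_assoc, ← whiskerLeft_comp, IsRegularEpi.w]

lemma m_coaction : S.m ≫ B.coaction = S.t₁ ≫ B.p ▷ A :=
  IsRegularEpi.fac ..

lemma probe_coaction [Epi (A ◁ A ◁ S.m)] :
    B.probe B.coaction = S.flipT ▷₂₂ A ≫ A ◁ S.piBarL1 := by
  rw [← cancel_epi (A ◁ A ◁ S.m), ← probe_comp, m_coaction, probe_t₁]

lemma coaction_piL1 [Epi (A ◁ A ◁ S.m)] [Epi (A ◁ S.m ▷ A)] :
    B.coaction ▷ A ≫ (α_ L A A).hom ≫ L ◁ S.piL1 = S.piL1 ≫ B.coaction := by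
  apply B.probe_injective S.memA
  calc
    B.probe (B.coaction ▷ A ≫ (α_ L A A).hom ≫ L ◁ S.piL1) =
        (S.flipT ▷₂₂ A ≫ A ◁ S.piBarL1) ▷₃₁ A ≫ (α_ A A A).hom ≫ A ◁ S.piL1 := by
      rw [← assoc, probe_comp_whiskerLeft, probe_whiskerRight, probe_coaction, assoc]
    _ = S.flipT ▷₂₂ (A ⊗ A) ≫ A ◁ (S.piBarL1 ▷₂₁ A ≫ S.piL1) := by
      simp [whiskerRight₃₁, whiskerRight₂₂, whiskerRight₂₁]
    _ = B.probe (S.piL1 ≫ B.coaction) := by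
      rw [← whiskerLeft_piL1_piBarL1, whiskerLeft_comp, ← reassoc_of% whisker_exchange₂₂,
        probe_comp, probe_coaction]

end Coaction

section Multiplication

variable [PreservesColimitsOfShape WalkingParallelPair (tensorRight A)]

lemma n₁_p_n₁ : B.n₁ ▷ A ≫ B.p ▷ A ≫ B.n₁ = (α_ L A A).hom ≫ L ◁ S.piL1 ≫ B.n₁ := by
  have h : S.piL1 ▷ A ≫ S.piL1 = (α_ A A A).hom ≫ A ◁ S.piL1 ≫ S.piL1 := by
    rw [← piL1_piL1, whiskerRight₂₁, assoc, Iso.hom_inv_id_assoc]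
  rw [← cancel_epi (B.p ▷ A ▷ A), associator_naturality_left_assoc, ← whisker_exchange_assoc,
    B.p_n₁, ← h, ← comp_whiskerRight_assoc, B.p_n₁]

lemma whiskerLeft_piL1_n₁_p : L ◁ S.piL1 ≫ B.n₁ ≫ B.p = L ◁ S.piBarR1c ≫ B.n₁ ≫ B.p := by
  have acted (f : A ⊗ A ⟶ A) : (L ◁ f ≫ B.n₁ ≫ B.p) ▷ A ≫ B.n₁ =
      (α_ L (A ⊗ A) A).hom ≫ L ◁ ((f ≫ B.p) ▷ A ≫ B.n₁) ≫ B.n₁ := by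
    simp only [comp_whiskerRight, assoc]
    rw [n₁_p_n₁, ← B.p_n₁]
    simp
  apply B.ndr.cancel_unit S.memI
  rw [acted, acted, B.condition]

variable [PreservesColimitsOfShape WalkingParallelPair (tensorLeft L)]

/-- The multiplication `μ` of the base object. -/
noncomputable def mul : L ⊗ L ⟶ L :=
  Cofork.IsColimit.desc (isColimitCoforkMapOfIsColimit (tensorLeft L) B.condition B.isColimit)
    (B.n₁ ≫ B.p) B.whiskerLeft_piL1_n₁_p

lemma whiskerLeft_p_mul : L ◁ B.p ≫ B.mul = B.n₁ ≫ B.p :=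
  Cofork.IsColimit.π_desc' (isColimitCoforkMapOfIsColimit (tensorLeft L) _ B.isColimit) _ _

lemma mul_unique (μ : L ⊗ L ⟶ L) (h : L ◁ B.p ≫ μ = B.n₁ ≫ B.p) : μ = B.mul := by
  rw [← cancel_epi (L ◁ B.p), h, whiskerLeft_p_mul]

lemma n₁_n₁ : L ◁ B.n₁ ≫ B.n₁ = (α_ L L A).inv ≫ B.mul ▷ A ≫ B.n₁ := by
  rw [← cancel_epi (L ◁ B.p ▷ A), ← whiskerLeft_comp_assoc, B.p_n₁,
    associator_inv_naturality_middle_assoc, ← comp_whiskerRight_assoc, whiskerLeft_p_mul,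
    comp_whiskerRight, assoc, n₁_p_n₁, Iso.inv_hom_id_assoc]

lemma mul_mul : L ◁ B.mul ≫ B.mul = (α_ L L L).inv ≫ B.mul ▷ L ≫ B.mul := by
  rw [← cancel_epi (L ◁ L ◁ B.p), ← whiskerLeft_comp_assoc, whiskerLeft_p_mul, whiskerLeft_comp,
    assoc, whiskerLeft_p_mul, reassoc_of% B.n₁_n₁, associator_inv_naturality_right_assoc,
    whisker_exchange_assoc, whiskerLeft_p_mul]

end Multiplication

/-- The counit `ε` of the base object. -/
noncomputable def counit : L ⟶ 𝟙_ C := Cofork.IsColimit.desc B.isColimit S.j S.piL1_j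

lemma p_counit : B.p ≫ B.counit = S.j :=
  Cofork.IsColimit.π_desc' B.isColimit _ _

section Comultiplication

variable [IsRegularEpi S.m] [PreservesColimitsOfShape WalkingParallelPair (tensorLeft A)]
  [PreservesColimitsOfShape WalkingParallelPair (tensorRight A)]

lemma coaction_p_n₁ : (B.coaction ≫ L ◁ B.p) ▷ A ≫ (α_ L L A).hom ≫ L ◁ B.n₁ =
    B.p ▷ A ≫ B.n₁ ≫ B.coaction := by
  rw [comp_whiskerRight, assoc, associator_naturality_middle_assoc, ← whiskerLeft_comp, B.p_n₁,
    coaction_piL1, reassoc_of% B.p_n₁]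

/-- The comultiplication `δ` of the base object. -/
noncomputable def comul : L ⟶ L ⊗ L :=
  Cofork.IsColimit.desc B.isColimit (B.coaction ≫ L ◁ B.p) <| by
    apply B.ndr.cancel B.mem
    rw [comp_whiskerRight_assoc S.piL1, comp_whiskerRight_assoc S.piBarR1c, coaction_p_n₁,
      ← comp_whiskerRight_assoc, B.condition, comp_whiskerRight_assoc]

lemma p_comul : B.p ≫ B.comul = B.coaction ≫ L ◁ B.p :=
  Cofork.IsColimit.π_desc' B.isColimit _ _

lemma m_p_comul : S.m ≫ B.p ≫ B.comul = S.t₁ ≫ B.p ▷ A ≫ L ◁ B.p := by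
  rw [p_comul, reassoc_of% B.m_coaction]

lemma comul_unique (δ : L ⟶ L ⊗ L) (h : S.m ≫ B.p ≫ δ = S.t₁ ≫ B.p ▷ A ≫ L ◁ B.p) :
    δ = B.comul := by
  rw [← cancel_epi B.p, ← cancel_epi S.m, h, m_p_comul]

lemma comul_comul :
    B.comul ≫ L ◁ B.comul = B.comul ≫ B.comul ▷ L ≫ (α_ L L L).hom := by
  have right : A ◁ S.m ≫ S.m ≫ B.p ≫ B.comul ≫ L ◁ B.comul =
      S.t₁ ▷₂₂ A ≫ A ◁ S.t₁ ≫ B.p ▷ (A ⊗ A) ≫ L ◁ B.p ▷ A ≫ L ◁ L ◁ B.p := by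
    rw [reassoc_of% B.m_p_comul, ← whiskerLeft_comp, p_comul, reassoc_of% S.whiskerLeft_m_t₁,
      whisker_exchange_assoc, ← whiskerLeft_comp, reassoc_of% B.m_coaction, whiskerLeft_comp,
      ← whisker_exchange_assoc, whiskerLeft_comp]
  have left : A ◁ S.m ≫ S.m ≫ B.p ≫ B.comul ≫ B.comul ▷ L ≫ (α_ L L L).hom =
      A ◁ S.t₁ ≫ S.t₁₃ ≫ S.t₁ ▷₂₂ A ≫ B.p ▷ (A ⊗ A) ≫ L ◁ B.p ▷ A ≫ L ◁ L ◁ B.p := by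
    have h := congrArg (· ▷ A) B.m_p_comul
    simp only [comp_whiskerRight] at h
    rw [reassoc_of% S.m_assoc, reassoc_of% B.m_p_comul, reassoc_of% S.m_t₁,
      whisker_exchange_assoc, whiskerRight₂₁, assoc, reassoc_of% h]
    simp [whiskerRight₂₂]
  rw [← cancel_epi B.p, ← cancel_epi S.m, ← cancel_epi (A ◁ S.m), right, left,
    reassoc_of% S.t₁₃_t₁]

lemma comul_counit_whiskerRight : B.comul ≫ B.counit ▷ L ≫ (λ_ L).hom = 𝟙 L := by
  rw [← cancel_epi B.p, ← cancel_epi S.m, reassoc_of% B.m_p_comul, whisker_exchange_assoc,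
    ← comp_whiskerRight_assoc, p_counit, leftUnitor_naturality, comp_id, S.m_eq, whiskerRight₁₀,
    assoc, assoc]

lemma comul_counit_whiskerLeft : B.comul ≫ L ◁ B.counit ≫ (ρ_ L).hom = 𝟙 L := by
  have h : S.t₁ ≫ A ◁ S.j ≫ (ρ_ A).hom = S.t₁ ≫ S.piBarR1c := S.t₁_piBarR1c.symm
  rw [← cancel_epi B.p, ← cancel_epi S.m, reassoc_of% B.m_p_comul, ← whiskerLeft_comp_assoc,
    p_counit, ← whisker_exchange_assoc, rightUnitor_naturality, comp_id, reassoc_of% h,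
    ← B.condition, reassoc_of% S.t₁_piL1]

end Comultiplication

section Bimodule

variable [IsRegularEpi S.m] [PreservesColimitsOfShape WalkingParallelPair (tensorLeft A)]
  [PreservesColimitsOfShape WalkingParallelPair (tensorRight A)]
  [PreservesColimitsOfShape WalkingParallelPair (tensorLeft L)]

lemma comul_mul : B.comul ≫ B.mul = 𝟙 L := by
  rw [← cancel_epi B.p, ← cancel_epi S.m, reassoc_of% B.m_p_comul, whiskerLeft_p_mul,
    reassoc_of% B.p_n₁, reassoc_of% S.t₁_piL1, comp_id]

lemma piL1_coaction : S.piL1 ≫ B.coaction =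
    A ◁ B.coaction ≫ (α_ A L A).inv ≫ B.p ▷ L ▷ A ≫ B.mul ▷ A := by
  have h : S.piL1 ≫ B.p = A ◁ B.p ≫ B.p ▷ L ≫ B.mul := by
    rw [whisker_exchange_assoc, whiskerLeft_p_mul, reassoc_of% B.p_n₁]
  rw [← cancel_epi (A ◁ S.m), reassoc_of% S.whiskerLeft_m_piL1, m_coaction, reassoc_of% S.piL1_t₁,
    ← whiskerLeft_comp_assoc, m_coaction, whiskerLeft_comp_assoc,
    associator_inv_naturality_middle_assoc, whiskerRight₂₁, assoc]
  simp only [← comp_whiskerRight, h]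

lemma whiskerLeft_comul_mul_whiskerRight :
    L ◁ B.comul ≫ (α_ L L L).inv ≫ B.mul ▷ L = B.mul ≫ B.comul := by
  symm
  rw [← cancel_epi (L ◁ B.p), ← cancel_epi (B.p ▷ A), reassoc_of% B.whiskerLeft_p_mul,
    reassoc_of% B.p_n₁, p_comul, reassoc_of% B.piL1_coaction, ← whiskerLeft_comp_assoc L B.p,
    p_comul, ← whisker_exchange_assoc, whiskerLeft_comp_assoc,
    associator_inv_naturality_left_assoc, associator_inv_naturality_right_assoc,
    ← whisker_exchange, ← whisker_exchange_assoc]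

lemma mul_comul : B.mul ≫ B.comul = B.comul ▷ L ≫ (α_ L L L).hom ≫ L ◁ B.mul := by
  rw [← cancel_epi (L ◁ B.p), ← cancel_epi (B.p ▷ A), reassoc_of% B.whiskerLeft_p_mul, p_comul,
    whisker_exchange_assoc, associator_naturality_right_assoc, ← whiskerLeft_comp,
    whiskerLeft_p_mul, whiskerLeft_comp, ← comp_whiskerRight_assoc, p_comul,
    reassoc_of% B.coaction_p_n₁]

end Bimodule

end FusionPair.BaseObject

theorem base_object_coseparable_comonoid_general {A L : C} {𝒴 : Set C} {S : FusionPair A 𝒴}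
    (B : S.BaseObject L) [IsRegularEpi S.m]
    [PreservesColimitsOfShape WalkingParallelPair (tensorLeft A)]
    [PreservesColimitsOfShape WalkingParallelPair (tensorRight A)]
    [PreservesColimitsOfShape WalkingParallelPair (tensorLeft L)] :
    ∃ (μ : L ⊗ L ⟶ L) (δ : L ⟶ L ⊗ L) (ε : L ⟶ 𝟙_ C),
      L ◁ B.p ≫ μ = B.n₁ ≫ B.p ∧
      (∀ μ' : L ⊗ L ⟶ L, L ◁ B.p ≫ μ' = B.n₁ ≫ B.p → μ' = μ) ∧
      L ◁ μ ≫ μ = (α_ L L L).inv ≫ μ ▷ L ≫ μ ∧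
      L ◁ B.n₁ ≫ B.n₁ = (α_ L L A).inv ≫ μ ▷ A ≫ B.n₁ ∧
      S.m ≫ B.p ≫ δ = S.t₁ ≫ B.p ▷ A ≫ L ◁ B.p ∧
      (∀ δ' : L ⟶ L ⊗ L, S.m ≫ B.p ≫ δ' = S.t₁ ≫ B.p ▷ A ≫ L ◁ B.p → δ' = δ) ∧
      δ ≫ L ◁ δ = δ ≫ δ ▷ L ≫ (α_ L L L).hom ∧
      δ ≫ μ = 𝟙 L ∧
      L ◁ δ ≫ (α_ L L L).inv ≫ μ ▷ L = μ ≫ δ ∧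
      μ ≫ δ = δ ▷ L ≫ (α_ L L L).hom ≫ L ◁ μ ∧
      B.p ≫ ε = S.j ∧
      δ ≫ ε ▷ L ≫ (λ_ L).hom = 𝟙 L ∧
      δ ≫ L ◁ ε ≫ (ρ_ L).hom = 𝟙 L :=
  ⟨B.mul, B.comul, B.counit, B.whiskerLeft_p_mul, B.mul_unique, B.mul_mul, B.n₁_n₁, B.m_p_comul,
    B.comul_unique, B.comul_comul, B.comul_mul, B.whiskerLeft_comul_mul_whiskerRight, B.mul_comul,
    B.p_counit, B.comul_counit_whiskerRight, B.comul_counit_whiskerLeft⟩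

/-- Theorem 3.1: the base object `L` of a regular weak multiplier
bimonoid carries a coseparable comonoid structure `(L, δ, ε)` with bicomodule
retraction `μ` of `δ`. -/
theorem base_object_coseparable_comonoid
    [HasCoequalizers C]
    (presL : ∀ X : C, PreservesColimitsOfShape WalkingParallelPair (tensorLeft X))
    (presR : ∀ X : C, PreservesColimitsOfShape WalkingParallelPair (tensorRight X))
    (regcomp : ∀ {X Y Z : C} (f : X ⟶ Y) (g : Y ⟶ Z),
      Nonempty (RegularEpi f) → Nonempty (RegularEpi g) → Nonempty (RegularEpi (f ≫ g)))
    {A : C} {𝒴 : Set C} (S : RWMB A 𝒴)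
    (hmreg : Nonempty (RegularEpi S.m))
    -- the base object: `p : A ⟶ L` is the coequalizer of `⊓ᴸ₁` and `⊓̄ᴿ₁ ∘ c⁻¹`
    (L : C) (p : A ⟶ L)
    (hpc : S.piL1 ≫ p = S.piBarR1c ≫ p)
    (hpu : ∀ {X : C} (h : A ⟶ X), S.piL1 ≫ h = S.piBarR1c ≫ h →
      ∃! k : L ⟶ X, p ≫ k = h)
    (memL : L ∈ 𝒴)
    -- `n₁` is the unique morphism with `n₁ ∘ (p ⊗ 1) = ⊓ᴸ₁`
    (n₁ : L ⊗ A ⟶ A) (hn₁ : (p ▷ A) ≫ n₁ = S.piL1)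
    -- `n₁` is non-degenerate on the right with respect to `𝒴`
    (hndn₁ : NdRightOn n₁ 𝒴) :
    ∃ (μ : L ⊗ L ⟶ L) (δ : L ⟶ L ⊗ L) (ε : L ⟶ 𝟙_ C),
      -- (1) `μ` is uniquely determined by `μ ∘ (1 ⊗ p) = p ∘ n₁`
      ((L ◁ p) ≫ μ = n₁ ≫ p) ∧
      (∀ μ' : L ⊗ L ⟶ L, (L ◁ p) ≫ μ' = n₁ ≫ p → μ' = μ) ∧
      -- `μ` is associative
      ((L ◁ μ) ≫ μ = (α_ L L L).inv ≫ (μ ▷ L) ≫ μ) ∧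
      -- `n₁` is an associative action with respect to `μ`
      ((L ◁ n₁) ≫ n₁ = (α_ L L A).inv ≫ (μ ▷ A) ≫ n₁) ∧
      -- (2) `δ` is uniquely determined by `δ ∘ p ∘ m = (p ⊗ p) ∘ t₁`
      (S.m ≫ p ≫ δ = S.t₁ ≫ (p ▷ A) ≫ (L ◁ p)) ∧
      (∀ δ' : L ⟶ L ⊗ L, S.m ≫ p ≫ δ' = S.t₁ ≫ (p ▷ A) ≫ (L ◁ p) → δ' = δ) ∧
      -- `δ` is coassociative
      (δ ≫ (L ◁ δ) = δ ≫ (δ ▷ L) ≫ (α_ L L L).hom) ∧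
      -- (3) `μ ∘ δ = 1`
      (δ ≫ μ = 𝟙 L) ∧
      -- (4) `δ` is a morphism of `L`-bimodules
      ((L ◁ δ) ≫ (α_ L L L).inv ≫ (μ ▷ L) = μ ≫ δ) ∧
      (μ ≫ δ = (δ ▷ L) ≫ (α_ L L L).hom ≫ (L ◁ μ)) ∧
      -- (5) `ε` is a counit for `δ` and satisfies `ε ∘ p = j`
      (p ≫ ε = S.j) ∧
      (δ ≫ (ε ▷ L) ≫ (λ_ L).hom = 𝟙 L) ∧
      (δ ≫ (L ◁ ε) ≫ (ρ_ L).hom = 𝟙 L) := by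
  have := presL A
  have := presL L
  have := presR A
  have : IsRegularEpi S.toFusionPair.m := ⟨hmreg⟩
  let B : S.toFusionPair.BaseObject L :=
    { p := p
      condition := hpc
      isColimit := Cofork.IsColimit.ofExistsUnique fun s => hpu s.π s.condition
      n₁ := n₁
      p_n₁ := hn₁
      mem := memL
      ndr := hndn₁ }
  exact base_object_coseparable_comonoid_general B

end WeakMultiplierBimonoid
end

section
/- Under the standing assumptions (C braided monoidal with coequalizers preserved by the monoidal product, composites of regular epimorphisms regular epi; (A,t₁,t₂,t₃,t₄,e₁,e₂,j) a regular weak multiplier bimonoid with m a regular epimorphism, non-degenerate with respect to a class 𝒴 containing I, A and L and closed under the monoidal product; n₁ non-degenerate on the right with respect to 𝒴), every module (V, v) over the semigroup A carries the structure of an L-bicomodule: there are unique coactions τ_V : V → L⊗V and τ̄_V : V → V⊗L satisfying τ_V∘v = (1⊗v)∘(τ⊗1) and τ̄_V∘v = (v⊗1)∘(1⊗c)∘(τ̄⊗1); these are coassociative, counital and commute. Moreover, every morphism of A-modules f : (V,v) → (V′,v′) is a morphism of L-bicomodules: τ_{V′}∘f = (1⊗f)∘τ_V and τ̄_{V′}∘f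 = (f⊗1)∘τ̄_V. Hence there is a functor U from A-modules to L-bicomodules acting as the identity on morphisms. -/
open CategoryTheory Category MonoidalCategory Limits

universe v u

namespace WeakMultiplierBimonoid

variable {C : Type u} [Category.{v} C] [MonoidalCategory C] [BraidedCategory C]

/-- A module over the semigroup `(A, m)`, relative to the class `𝒴`: an object of `𝒴`
with an associative action which is a regular epimorphism and non-degenerate on the
left with respect to `𝒴`. -/
structure AModule (A : C) (m : A ⊗ A ⟶ A) (𝒴 : Set C) where
  V : C
  mem : V ∈ 𝒴
  act : A ⊗ V ⟶ V
  assoc : (A ◁ act) ≫ act = (α_ A A V).inv ≫ (m ▷ V) ≫ act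
  regEpi : Nonempty (RegularEpi act)
  nd : NdLeftOn act 𝒴

/-!
The coactions on `V` are obtained by descent: one has to show that `(1 ⊗ v) ∘ (τ ⊗ 1)` and
`(v ⊗ 1) ∘ (1 ⊗ c) ∘ (τ̄ ⊗ 1)` identify whatever a suitable regular epimorphism identifies; the
bicomodule laws and the naturality then follow from the corresponding facts on `A`, since `v` is
epi.

The non-degeneracy of `n₁` and the identity `(1 ⊗ n₁) ∘ (τ̄ ⊗ 1) = e₁` turn the descent
condition for the right coaction into one about `e₁`. If `φ` is a morphism of modules over
`A ⊗ A` with non-degenerate codomain, the relation between `e₁` and `e₂` exchanges `e₁` before `φ`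
for `e₂` in an outer factor, so `f ↦ φ ∘ (e₁ ⊗ 1) ∘ f` depends on `φ ∘ f` only. This settles
the right coaction, with `v` as the regular epimorphism.

For the left coaction only the composite with `m ⊗ 1`, namely `(p ⊗ v) ∘ (t₁ ⊗ 1)`, can be
controlled, and the regular epimorphism is `v ∘ (1 ⊗ v) = v ∘ (m ⊗ 1)`. Axiom V reduces
`⊓̄ᴿ₁ ∘ c⁻¹` of `(1 ⊗ v) ∘ (t₁ ⊗ 1)` to the same statement about `e₁`, and Axioms VII and VIII show
that `⊓̄ᴿ₁ ∘ c⁻¹` determines the composite with `p`.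
-/

/-- `f` applied to the two outer strands of `(P ⊗ Q) ⊗ V`, the middle strand being braided to the
right: in Sweedler-style notation `p ⊗ q ⊗ v ↦ f (p ⊗ v) ⊗ q`. -/
def applyOuter {P V W : C} (f : P ⊗ V ⟶ W) (Q : C) : (P ⊗ Q) ⊗ V ⟶ W ⊗ Q :=
  (α_ P Q V).hom ≫ P ◁ (β_ Q V).hom ≫ (α_ P V Q).inv ≫ f ▷ Q

section applyOuter

variable {P Q Q' V V' W W' : C}

theorem applyOuter_comp (f : P ⊗ V ⟶ W) (g : W ⟶ W') :
    applyOuter (f ≫ g) Q = applyOuter f Q ≫ g ▷ Q := by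
  simp [applyOuter]

theorem whiskerRight_comp_applyOuter (f : P ⊗ V ⟶ W) (g : Q ⟶ Q') :
    (P ◁ g) ▷ V ≫ applyOuter f Q' = applyOuter f Q ≫ W ◁ g := by
  have slide : P ◁ g ▷ V ≫ P ◁ (β_ Q' V).hom = P ◁ (β_ Q V).hom ≫ P ◁ V ◁ g := by
    rw [← whiskerLeft_comp, BraidedCategory.braiding_naturality_left, whiskerLeft_comp]
  simp [applyOuter, ← whisker_exchange, reassoc_of% slide]

theorem whiskerLeft_comp_applyOuter (g : V ⟶ V') (f : P ⊗ V' ⟶ W) :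
    (P ⊗ Q) ◁ g ≫ applyOuter f Q = applyOuter (P ◁ g ≫ f) Q := by
  have slide : P ◁ Q ◁ g ≫ P ◁ (β_ Q V').hom = P ◁ (β_ Q V).hom ≫ P ◁ g ▷ Q := by
    rw [← whiskerLeft_comp, BraidedCategory.braiding_naturality_right, whiskerLeft_comp]
  simp [applyOuter, reassoc_of% slide]

theorem applyOuter_tensor (f : P ⊗ V ⟶ W) :
    applyOuter f (Q ⊗ Q') = 𝟙 _ ⊗≫ (P ⊗ Q) ◁ (β_ Q' V).hom ⊗≫ applyOuter f Q ▷ Q' ⊗≫ 𝟙 _ := by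
  rw [applyOuter, applyOuter, BraidedCategory.braiding_tensor_left_hom]
  monoidal

instance (f : P ⊗ V ⟶ W) [Epi (f ▷ Q)] : Epi (applyOuter f Q) := by
  unfold applyOuter
  infer_instance

end applyOuter

namespace NdLeftOn

variable {Z V W : C} {v : Z ⊗ V ⟶ W} {𝒴 : Set C}

omit [BraidedCategory C] in
theorem hom_ext (h : NdLeftOn v 𝒴) {X Y : C} (hY : Y ∈ 𝒴) {g₁ g₂ : X ⟶ V ⊗ Y}
    (e : Z ◁ g₁ ≫ (α_ Z V Y).inv ≫ v ▷ Y = Z ◁ g₂ ≫ (α_ Z V Y).inv ≫ v ▷ Y) : g₁ = g₂ :=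
  h X Y hY e

theorem hom_ext_braided (h : NdLeftOn v 𝒴) {X Y : C} (hY : Y ∈ 𝒴) {g₁ g₂ : X ⟶ Y ⊗ V}
    (e : Z ◁ g₁ ≫ (α_ Z Y V).inv ≫ (β_ Z Y).hom ▷ V ≫ (α_ Y Z V).hom ≫ Y ◁ v
      = Z ◁ g₂ ≫ (α_ Z Y V).inv ≫ (β_ Z Y).hom ▷ V ≫ (α_ Y Z V).hom ≫ Y ◁ v) : g₁ = g₂ := by
  have pass (g : X ⟶ Y ⊗ V) :
      (Z ◁ (g ≫ (β_ V Y).inv) ≫ (α_ Z V Y).inv ≫ v ▷ Y) ≫ (β_ W Y).hom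
        = Z ◁ g ≫ (α_ Z Y V).inv ≫ (β_ Z Y).hom ▷ V ≫ (α_ Y Z V).hom ≫ Y ◁ v := by
    simp
  rw [← cancel_mono (β_ V Y).inv]
  apply h.hom_ext hY
  rw [← cancel_mono (β_ W Y).hom, pass, pass, e]

end NdLeftOn

namespace NdRightOn

variable {Z V W : C} {v : Z ⊗ V ⟶ W} {𝒴 : Set C}

theorem hom_ext (h : NdRightOn v 𝒴) {X Y : C} (hY : Y ∈ 𝒴) {g₁ g₂ : X ⟶ Y ⊗ Z}
    (e : g₁ ▷ V ≫ (α_ Y Z V).hom ≫ Y ◁ v = g₂ ▷ V ≫ (α_ Y Z V).hom ≫ Y ◁ v) : g₁ = g₂ := by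
  have pass (g : X ⟶ Y ⊗ Z) :
      V ◁ g ≫ (α_ V Y Z).inv ≫ (β_ V Y).hom ▷ Z ≫ (α_ Y V Z).hom ≫ Y ◁ ((β_ V Z).hom ≫ v)
        = (β_ V X).hom ≫ g ▷ V ≫ (α_ Y Z V).hom ≫ Y ◁ v := by
    rw [← BraidedCategory.braiding_naturality_right_assoc]
    simp
  apply NdLeftOn.hom_ext_braided h hY
  rw [pass, pass, e]

theorem hom_ext_unit (h : NdRightOn v 𝒴) (hI : 𝟙_ C ∈ 𝒴) {X : C} {g₁ g₂ : X ⟶ Z}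
    (e : g₁ ▷ V ≫ v = g₂ ▷ V ≫ v) : g₁ = g₂ := by
  rw [← cancel_mono (λ_ Z).inv]
  apply h.hom_ext hI
  simpa using e

theorem hom_ext_middle (h : NdRightOn v 𝒴) {X Y Y' : C} (hY : Y ⊗ Y' ∈ 𝒴)
    {g₁ g₂ : X ⟶ Y ⊗ (Z ⊗ Y')}
    (e : g₁ ▷ V ≫ (α_ Y (Z ⊗ Y') V).hom ≫ Y ◁ applyOuter v Y'
      = g₂ ▷ V ≫ (α_ Y (Z ⊗ Y') V).hom ≫ Y ◁ applyOuter v Y') : g₁ = g₂ := by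
  have pass (g : X ⟶ Y ⊗ (Z ⊗ Y')) :
      ((g ≫ Y ◁ (β_ Y' Z).inv ≫ (α_ Y Y' Z).inv) ▷ V ≫ (α_ (Y ⊗ Y') Z V).hom ≫ (Y ⊗ Y') ◁ v) ≫
        (α_ Y Y' W).hom ≫ Y ◁ (β_ Y' W).hom
      = g ▷ V ≫ (α_ Y (Z ⊗ Y') V).hom ≫ Y ◁ applyOuter v Y' := by
    calc
      _ = g ▷ V ≫ (α_ Y (Z ⊗ Y') V).hom ≫
          Y ◁ ((β_ Y' Z).inv ▷ V ≫ (α_ Y' Z V).hom ≫ Y' ◁ v ≫ (β_ Y' W).hom) := by monoidal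
      _ = _ := by simp [applyOuter]
  rw [← cancel_mono (Y ◁ (β_ Y' Z).inv ≫ (α_ Y Y' Z).inv)]
  apply h.hom_ext hY
  rw [← cancel_mono ((α_ Y Y' W).hom ≫ Y ◁ (β_ Y' W).hom), pass, pass, e]

theorem hom_ext_braided (h : NdRightOn v 𝒴) {X Y : C} (hY : Y ∈ 𝒴) {g₁ g₂ : X ⟶ Z ⊗ Y}
    (e : g₁ ▷ V ≫ applyOuter v Y = g₂ ▷ V ≫ applyOuter v Y) : g₁ = g₂ := by
  have pass (g : X ⟶ Z ⊗ Y) :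
      ((g ≫ (β_ Y Z).inv) ▷ V ≫ (α_ Y Z V).hom ≫ Y ◁ v) ≫ (β_ Y W).hom
        = g ▷ V ≫ applyOuter v Y := by
    simp [applyOuter]
  rw [← cancel_mono (β_ Y Z).inv]
  apply h.hom_ext hY
  rw [← cancel_mono (β_ Y W).hom, pass, pass, e]

end NdRightOn

/-- The diagonal action `a ⊗ b` of `P ⊗ Q` on `V ⊗ W`, with the middle strands braided; for
`a = b = m` it is the multiplication of `A ⊗ A`. -/
def tensorAct {P Q V W V' W' : C} (a : P ⊗ V ⟶ V') (b : Q ⊗ W ⟶ W') :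
    (P ⊗ Q) ⊗ (V ⊗ W) ⟶ V' ⊗ W' :=
  tensorμ P Q V W ≫ (a ⊗ₘ b)

theorem hom_ext_tensorAct {P Q V W V' W' : C} {a : P ⊗ V ⟶ V'} {b : Q ⊗ W ⟶ W'} {𝒴 : Set C}
    (ha : NdLeftOn a 𝒴) (hb : NdLeftOn b 𝒴) (hV : V ∈ 𝒴) (hW' : W' ∈ 𝒴) {X : C}
    {g₁ g₂ : X ⟶ V ⊗ W}
    (e : (P ⊗ Q) ◁ g₁ ≫ tensorAct a b = (P ⊗ Q) ◁ g₂ ≫ tensorAct a b) : g₁ = g₂ := by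
  have split (g : X ⟶ V ⊗ W) :
      P ◁ (Q ◁ g ≫ (α_ Q V W).inv ≫ (β_ Q V).hom ▷ W ≫ (α_ V Q W).hom ≫ V ◁ b) ≫
          (α_ P V W').inv ≫ a ▷ W'
        = (α_ P Q X).inv ≫ (P ⊗ Q) ◁ g ≫ tensorAct a b := by
    rw [tensorAct, tensorμ, tensorHom_def']
    monoidal
  apply hb.hom_ext_braided hV
  apply ha.hom_ext hW'
  rw [split, split, e]

section tensorAct

variable {P R Q Q' V : C}

theorem tensorAct_comp_applyOuter {m : P ⊗ P ⟶ P} {act : P ⊗ V ⟶ V}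
    (assoc : P ◁ act ≫ act = (α_ P P V).inv ≫ m ▷ V ≫ act) (b : R ⊗ Q ⟶ Q') :
    (P ⊗ R) ◁ applyOuter act Q ≫ tensorAct act b
      = (α_ (P ⊗ R) (P ⊗ Q) V).inv ≫ tensorAct m b ▷ V ≫ applyOuter act Q' := by
  calc
    _ = 𝟙 _ ⊗≫ (P ⊗ R ⊗ P) ◁ (β_ Q V).hom ⊗≫ P ◁ (R ◁ act ≫ (β_ R V).hom) ▷ Q ⊗≫
          act ▷ (R ⊗ Q) ⊗≫ V ◁ b := by
      rw [tensorAct, tensorμ, MonoidalCategory.tensorHom_def, applyOuter]; monoidal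
    _ = 𝟙 _ ⊗≫ (P ⊗ R ⊗ P) ◁ (β_ Q V).hom ⊗≫ P ◁ (β_ R P).hom ▷ (V ⊗ Q) ⊗≫
          (P ⊗ P) ◁ (β_ R V).hom ▷ Q ⊗≫ (P ◁ act ≫ act) ▷ (R ⊗ Q) ⊗≫ V ◁ b := by
      rw [BraidedCategory.braiding_naturality_right, BraidedCategory.braiding_tensor_right_hom]
      monoidal
    _ = 𝟙 _ ⊗≫ (P ⊗ R ⊗ P) ◁ (β_ Q V).hom ⊗≫ P ◁ (β_ R P).hom ▷ (V ⊗ Q) ⊗≫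
          ((P ⊗ P) ◁ (β_ R V).hom ≫ m ▷ (V ⊗ R)) ▷ Q ⊗≫ act ▷ (R ⊗ Q) ⊗≫ V ◁ b := by
      rw [assoc]; monoidal
    _ = 𝟙 _ ⊗≫ ((P ⊗ (R ⊗ P)) ◁ (β_ Q V).hom ≫
          (P ◁ (β_ R P).hom ≫ (α_ P P R).inv ≫ m ▷ R) ▷ (V ⊗ Q)) ⊗≫
          P ◁ (β_ R V).hom ▷ Q ⊗≫ act ▷ (R ⊗ Q) ⊗≫ V ◁ b := by
      rw [whisker_exchange]; monoidal
    _ = 𝟙 _ ⊗≫ P ◁ (β_ R P).hom ▷ (Q ⊗ V) ⊗≫ m ▷ (R ⊗ Q ⊗ V) ⊗≫ P ◁ (β_ (R ⊗ Q) V).hom ⊗≫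
          (act ▷ (R ⊗ Q) ≫ V ◁ b) := by
      rw [whisker_exchange, BraidedCategory.braiding_tensor_left_hom]; monoidal
    _ = 𝟙 _ ⊗≫ P ◁ (β_ R P).hom ▷ (Q ⊗ V) ⊗≫ m ▷ (R ⊗ Q ⊗ V) ⊗≫
          P ◁ ((β_ (R ⊗ Q) V).hom ≫ V ◁ b) ⊗≫ act ▷ Q' := by
      rw [← whisker_exchange]; monoidal
    _ = _ := by
      rw [← BraidedCategory.braiding_naturality_left, tensorAct, tensorμ,
        MonoidalCategory.tensorHom_def, applyOuter]
      monoidal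

theorem tensorAct_comp_whiskerLeft {m : R ⊗ R ⟶ R} {act : R ⊗ V ⟶ V}
    (assoc : R ◁ act ≫ act = (α_ R R V).inv ≫ m ▷ V ≫ act) (a : P ⊗ Q ⟶ Q') :
    (P ⊗ R) ◁ ((α_ Q R V).hom ≫ Q ◁ act) ≫ tensorAct a act
      = (α_ (P ⊗ R) (Q ⊗ R) V).inv ≫ tensorAct a m ▷ V ≫ (α_ Q' R V).hom ≫ Q' ◁ act := by
  calc
    _ = 𝟙 _ ⊗≫ ((P ⊗ R ⊗ Q) ◁ act ≫
          (P ◁ (β_ R Q).hom ≫ (α_ P Q R).inv ≫ a ▷ R) ▷ V) ⊗≫ Q' ◁ act := by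
      rw [tensorAct, tensorμ, MonoidalCategory.tensorHom_def]; monoidal
    _ = 𝟙 _ ⊗≫ P ◁ (β_ R Q).hom ▷ (R ⊗ V) ⊗≫ a ▷ (R ⊗ R ⊗ V) ⊗≫ Q' ◁ (R ◁ act ≫ act) := by
      rw [whisker_exchange]; monoidal
    _ = _ := by
      rw [assoc, tensorAct, tensorμ, MonoidalCategory.tensorHom_def]; monoidal

end tensorAct

section lift

variable {A L V : C}

/-- `(1 ⊗ v) ∘ (τ ⊗ 1)`, through which the left coaction of the module `(V, v)` is induced. -/
def leftLift (τ : A ⟶ L ⊗ A) (act : A ⊗ V ⟶ V) : A ⊗ V ⟶ L ⊗ V :=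
  τ ▷ V ≫ (α_ L A V).hom ≫ L ◁ act

/-- `(v ⊗ 1) ∘ (1 ⊗ c) ∘ (τ̄ ⊗ 1)`, through which the right coaction of the module `(V, v)` is
induced. -/
def rightLift (τbar : A ⟶ A ⊗ L) (act : A ⊗ V ⟶ V) : A ⊗ V ⟶ V ⊗ L :=
  τbar ▷ V ≫ applyOuter act L

end lift

theorem braiding_conj_whisker {P Q R R' : C} (f : P ⊗ Q ⟶ R ⊗ R') (W : C) :
    (β_ P W).hom ▷ Q ≫ (α_ W P Q).hom ≫ W ◁ f ≫ (α_ W R R').inv ≫ (β_ R W).inv ▷ R'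
      = (α_ P W Q).hom ≫ P ◁ (β_ Q W).inv ≫ (α_ P Q W).inv ≫ f ▷ W ≫ (α_ R R' W).hom ≫
          R ◁ (β_ R' W).hom ≫ (α_ R W R').inv := by
  rw [← cancel_epi ((α_ P Q W).hom ≫ P ◁ (β_ Q W).hom ≫ (α_ P W Q).inv),
    ← cancel_mono ((β_ R W).hom ▷ R' ≫ (α_ W R R').hom)]
  simpa using (BraidedCategory.braiding_naturality_left f W).symm

namespace RWMB

variable {A : C} {𝒴 : Set C} (S : RWMB A 𝒴)

theorem fusion_comp_mul :
    A ◁ S.t₁ ⊗≫ (β_ A A).hom ▷ A ⊗≫ A ◁ S.t₁ ⊗≫ (β_ A A).inv ▷ A ⊗≫ S.m ▷ A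
      = 𝟙 _ ⊗≫ S.m ▷ A ⊗≫ S.t₁ := by
  calc
    _ = (A ◁ S.t₁ ≫ wl (β_ A A).hom ≫ A ◁ S.t₁ ≫ wl (β_ A A).inv ≫ wl S.t₁) ⊗≫
          S.j ▷ (A ⊗ A) ⊗≫ 𝟙 _ := by
      rw [S.hm₁]; dsimp only [wl]; monoidal
    _ = 𝟙 _ ⊗≫ S.t₁ ▷ A ⊗≫ (A ◁ S.t₁ ≫ S.j ▷ (A ⊗ A)) ⊗≫ 𝟙 _ := by
      rw [S.ax1]; dsimp only [wl]; monoidal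
    _ = 𝟙 _ ⊗≫ (S.t₁ ≫ S.j ▷ A ≫ (λ_ A).hom) ▷ A ⊗≫ S.t₁ := by
      rw [whisker_exchange]; monoidal
    _ = _ := by rw [← S.hm₁]

theorem mul_assoc : A ◁ S.m ≫ S.m = (α_ A A A).inv ≫ S.m ▷ A ≫ S.m := by
  calc
    _ = A ◁ (S.t₁ ≫ S.j ▷ A ≫ (λ_ A).hom) ≫ S.m := by rw [← S.hm₁]
    _ = A ◁ (S.t₁ ≫ S.e₁) ≫ A ◁ (S.j ▷ A ≫ (λ_ A).hom) ≫ S.m := by rw [S.ax3]; monoidal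
    _ = A ◁ S.t₁ ≫ A ◁ (β_ A A).inv ≫
        (A ◁ (β_ A A).hom ≫ A ◁ S.e₁ ≫ A ◁ (S.j ▷ A ≫ (λ_ A).hom) ≫ S.m) := by simp
    _ = A ◁ S.t₁ ⊗≫ ((α_ A A A).hom ≫ A ◁ (β_ A A).inv ≫ (α_ A A A).inv ≫ S.t₁ ▷ A ≫
          (α_ A A A).hom ≫ A ◁ (β_ A A).hom ≫ (α_ A A A).inv) ⊗≫ S.m ▷ A ⊗≫ S.j ▷ A ⊗≫ 𝟙 _ := by
      rw [← S.ax8]; dsimp only [wl, ml]; monoidal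
    _ = (A ◁ S.t₁ ⊗≫ (β_ A A).hom ▷ A ⊗≫ A ◁ S.t₁ ⊗≫ (β_ A A).inv ▷ A ⊗≫ S.m ▷ A) ⊗≫
          S.j ▷ A ⊗≫ 𝟙 _ := by
      rw [← braiding_conj_whisker S.t₁ A]; monoidal
    _ = 𝟙 _ ⊗≫ S.m ▷ A ⊗≫ (S.t₁ ≫ (S.j ▷ A) ≫ (λ_ A).hom) := by
      rw [S.fusion_comp_mul]; monoidal
    _ = _ := by rw [← S.hm₁]; monoidal

theorem whiskerLeft_mul_comp_t₁ :
    A ◁ S.m ≫ S.t₁ = (α_ A A A).inv ≫ S.t₁ ▷ A ≫ (α_ A A A).hom ≫ A ◁ S.m := by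
  apply S.ndl.hom_ext S.memA
  calc
    _ = A ◁ A ◁ S.m ≫ (A ◁ S.t₁ ≫ ml S.m) := by dsimp only [ml]; monoidal
    _ = 𝟙 _ ⊗≫ ((A ⊗ A) ◁ S.m ≫ S.t₂ ▷ A) ⊗≫ A ◁ S.m := by
      rw [S.hc12]; dsimp only [wl]; monoidal
    _ = 𝟙 _ ⊗≫ S.t₂ ▷ (A ⊗ A) ⊗≫ A ◁ (A ◁ S.m ≫ S.m) := by rw [whisker_exchange]; monoidal
    _ = 𝟙 _ ⊗≫ (wl S.t₂ ≫ A ◁ S.m) ▷ A ⊗≫ A ◁ S.m := by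
      rw [S.mul_assoc]; dsimp only [wl]; monoidal
    _ = 𝟙 _ ⊗≫ A ◁ S.t₁ ▷ A ⊗≫ (S.m ▷ (A ⊗ A) ≫ A ◁ S.m) := by
      rw [← S.hc12]; dsimp only [ml]; monoidal
    _ = _ := by rw [← whisker_exchange]; monoidal

theorem braiding_braiding_mul : (β_ A A).hom ≫ (β_ A A).hom ≫ S.m = S.m := by
  have slide : (β_ A A).hom ▷ A ≫ (α_ A A A).hom ≫ A ◁ S.m
      = (α_ A A A).hom ≫ A ◁ (β_ A A).inv ≫ (α_ A A A).inv ≫ S.m ▷ A ≫ (β_ A A).hom := by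
    rw [BraidedCategory.braiding_naturality_left, BraidedCategory.braiding_tensor_left_hom]
    simp
  apply S.ndr.hom_ext_unit S.memI
  calc
    _ = (β_ A A).hom ▷ A ≫ (β_ A A).hom ▷ A ≫ (α_ A A A).hom ≫ A ◁ S.m ≫ S.m := by
      rw [S.mul_assoc]; simp
    _ = (β_ A A).hom ▷ A ≫ ((β_ A A).hom ▷ A ≫ (α_ A A A).hom ≫ A ◁ S.m) ≫ S.m := by simp
    _ = (β_ A A).hom ▷ A ⊗≫ A ◁ (β_ A A).inv ⊗≫ (S.t₁ ≫ S.j ▷ A ≫ (λ_ A).hom) ▷ A ≫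
          (β_ A A).hom ≫ S.m := by
      rw [slide, ← S.hm₁]; monoidal
    _ = (β_ A A).hom ▷ A ⊗≫ A ◁ (β_ A A).inv ⊗≫ S.t₁ ▷ A ⊗≫
          (S.j ▷ (A ⊗ A) ≫ 𝟙_ C ◁ ((β_ A A).hom ≫ S.m)) ≫ (λ_ A).hom := by monoidal
    _ = (β_ A A).hom ▷ A ⊗≫ A ◁ (β_ A A).inv ⊗≫
          (wl S.t₁ ≫ A ◁ (β_ A A).hom ≫ A ◁ S.m) ≫ S.j ▷ A ≫ (λ_ A).hom := by
      rw [← whisker_exchange]; dsimp only [wl]; monoidal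
    _ = (β_ A A).hom ▷ A ⊗≫ A ◁ ((β_ A A).inv ≫ (β_ A A).hom) ⊗≫ S.t₃ ▷ A ⊗≫
          (A ◁ S.m ≫ S.j ▷ A) ≫ (λ_ A).hom := by
      rw [S.hc13]; dsimp only [wl]; monoidal
    _ = ((β_ A A).hom ≫ S.t₃ ≫ S.j ▷ A ≫ (λ_ A).hom) ▷ A ≫ S.m := by
      rw [Iso.inv_hom_id, whisker_exchange]; monoidal
    _ = _ := by rw [← S.hm₃]

/-- `t₄ ∘ c`, the fusion morphism through which the coaction `τ̄` is defined. -/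
def t₄c : A ⊗ A ⟶ A ⊗ A := (β_ A A).hom ≫ S.t₄

theorem t₄c_counit : S.t₄c ≫ A ◁ S.j ≫ (ρ_ A).hom = S.m := by
  simp [t₄c, S.hm₄.symm]

theorem t₁_comp_applyOuter_mul :
    S.t₁ ▷ A ≫ applyOuter S.m A = applyOuter S.t₄c A ≫ (α_ A A A).hom ≫ A ◁ S.m := by
  calc
    _ = S.t₁ ▷ A ⊗≫ A ◁ (β_ A A).hom ⊗≫ ((β_ A A).hom ≫ (β_ A A).hom ≫ S.m) ▷ A := by
      rw [S.braiding_braiding_mul, applyOuter]; monoidal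
    _ = (S.t₁ ▷ A ≫ (β_ (A ⊗ A) A).hom) ⊗≫ (β_ A A).hom ▷ A ⊗≫ S.m ▷ A := by
      rw [BraidedCategory.braiding_tensor_left_hom]; monoidal
    _ = (β_ (A ⊗ A) A).hom ≫ (A ◁ S.t₁ ≫ wl (β_ A A).hom ≫ ml S.m) := by
      rw [BraidedCategory.braiding_naturality_left]; dsimp only [wl, ml]; monoidal
    _ = _ := by
      rw [S.hc14, BraidedCategory.braiding_tensor_left_hom, t₄c, applyOuter]
      dsimp only [wl]; monoidal

theorem e₁_comp_tensorAct_mul :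
    (A ⊗ A) ◁ S.e₁ ≫ tensorAct S.m S.m = S.e₂ ▷ (A ⊗ A) ≫ tensorAct S.m S.m := by
  rw [tensorAct, MonoidalCategory.tensorHom_def]
  exact S.hecomp

section equivariant

variable {V U₁ U₂ : C} {a : A ⊗ U₁ ⟶ U₁} {b : A ⊗ U₂ ⟶ U₂} {φ : (A ⊗ A) ⊗ V ⟶ U₁ ⊗ U₂}

theorem e₁_whiskerRight_comp_tensorAct (hφ : (A ⊗ A) ◁ φ ≫ tensorAct a b
      = (α_ (A ⊗ A) (A ⊗ A) V).inv ≫ tensorAct S.m S.m ▷ V ≫ φ) :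
    (A ⊗ A) ◁ (S.e₁ ▷ V ≫ φ) ≫ tensorAct a b
      = S.e₂ ▷ ((A ⊗ A) ⊗ V) ≫ (A ⊗ A) ◁ φ ≫ tensorAct a b := by
  calc
    _ = 𝟙 _ ⊗≫ ((A ⊗ A) ◁ S.e₁ ≫ tensorAct S.m S.m) ▷ V ≫ φ := by
      rw [whiskerLeft_comp, Category.assoc, hφ]; monoidal
    _ = _ := by rw [S.e₁_comp_tensorAct_mul, hφ]; monoidal

theorem comp_e₁_whiskerRight_congr (hφ : (A ⊗ A) ◁ φ ≫ tensorAct a b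
      = (α_ (A ⊗ A) (A ⊗ A) V).inv ≫ tensorAct S.m S.m ▷ V ≫ φ)
    (ha : NdLeftOn a 𝒴) (hb : NdLeftOn b 𝒴) (hU₁ : U₁ ∈ 𝒴) (hU₂ : U₂ ∈ 𝒴) {X : C}
    {f g : X ⟶ (A ⊗ A) ⊗ V} (h : f ≫ φ = g ≫ φ) : f ≫ S.e₁ ▷ V ≫ φ = g ≫ S.e₁ ▷ V ≫ φ := by
  have pull (k : X ⟶ (A ⊗ A) ⊗ V) : (A ⊗ A) ◁ (k ≫ S.e₁ ▷ V ≫ φ) ≫ tensorAct a b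
      = S.e₂ ▷ X ≫ (A ⊗ A) ◁ (k ≫ φ) ≫ tensorAct a b := by
    rw [whiskerLeft_comp, Category.assoc, S.e₁_whiskerRight_comp_tensorAct hφ,
      whisker_exchange_assoc, whiskerLeft_comp, Category.assoc]
  apply hom_ext_tensorAct ha hb hU₁ hU₂
  rw [pull, pull, h]

end equivariant

theorem applyOuter_mul_comp_e₁ :
    applyOuter S.m A ≫ S.e₁ = S.e₁ ▷ A ≫ applyOuter S.m A := by
  apply hom_ext_tensorAct S.ndl S.ndl S.memA S.memA
  rw [S.e₁_whiskerRight_comp_tensorAct (tensorAct_comp_applyOuter S.mul_assoc S.m),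
    whiskerLeft_comp, Category.assoc, S.e₁_comp_tensorAct_mul, whisker_exchange_assoc]

theorem applyOuter_t₁_comp_e₁ :
    applyOuter S.t₁ A ≫ (α_ A A A).hom ≫ A ◁ S.e₁
      = S.e₁ ▷ A ≫ applyOuter S.t₁ A ≫ (α_ A A A).hom := by
  calc
    _ = (α_ A A A).hom ≫ A ◁ (β_ A A).hom ≫ (wl S.t₁ ≫ A ◁ S.e₁) := by
      rw [applyOuter]; dsimp only [wl]; monoidal
    _ = _ := by rw [S.ax6, applyOuter]; simp [wl]

theorem applyOuter_t₄c_comp_applyOuter_mul :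
    (α_ (A ⊗ A) A A).hom ≫ (A ⊗ A) ◁ (β_ A A).hom ≫ (α_ (A ⊗ A) A A).inv ≫
        applyOuter S.t₄c A ▷ A ≫ (α_ A A A).hom ▷ A ≫ (α_ A (A ⊗ A) A).hom ≫ A ◁ applyOuter S.m A
      = applyOuter S.t₁ A ▷ A ≫ (α_ A A A).hom ▷ A ≫ applyOuter S.m (A ⊗ A) := by
  calc
    _ = 𝟙 _ ⊗≫ (A ⊗ A) ◁ (β_ A A).hom ⊗≫ A ◁ (β_ A A).hom ▷ A ⊗≫
          (S.t₄c ▷ (A ⊗ A) ≫ (A ⊗ A) ◁ (β_ A A).hom) ⊗≫ A ◁ S.m ▷ A ⊗≫ 𝟙 _ := by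
      dsimp only [applyOuter]; monoidal
    _ = 𝟙 _ ⊗≫ A ◁ (A ◁ (β_ A A).hom ≫ (α_ A A A).inv ≫ (β_ A A).hom ▷ A ≫ (α_ A A A).hom ≫
          A ◁ (β_ A A).hom) ⊗≫ S.t₄c ▷ (A ⊗ A) ⊗≫ A ◁ S.m ▷ A ⊗≫ 𝟙 _ := by
      rw [← whisker_exchange]; monoidal
    _ = 𝟙 _ ⊗≫ A ◁ (β_ A A).hom ▷ A ⊗≫ (A ⊗ A) ◁ (β_ A A).hom ⊗≫
          (applyOuter S.t₄c A ≫ (α_ A A A).hom ≫ A ◁ S.m) ▷ A ⊗≫ 𝟙 _ := by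
      rw [← BraidedCategory.yang_baxter, applyOuter]; monoidal
    _ = 𝟙 _ ⊗≫ A ◁ (β_ A A).hom ▷ A ⊗≫ ((A ⊗ A) ◁ (β_ A A).hom ≫ S.t₁ ▷ (A ⊗ A)) ⊗≫
          applyOuter S.m A ▷ A ⊗≫ 𝟙 _ := by
      rw [← S.t₁_comp_applyOuter_mul]; monoidal
    _ = _ := by
      rw [whisker_exchange, applyOuter_tensor]; dsimp only [applyOuter]; monoidal

theorem applyOuter_t₄c_comp_e₁ :
    applyOuter S.t₄c A ≫ (α_ A A A).hom ≫ A ◁ S.e₁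
      = S.e₁ ▷ A ≫ applyOuter S.t₄c A ≫ (α_ A A A).hom := by
  let swap : ((A ⊗ A) ⊗ A) ⊗ A ⟶ ((A ⊗ A) ⊗ A) ⊗ A :=
    (α_ (A ⊗ A) A A).hom ≫ (A ⊗ A) ◁ (β_ A A).hom ≫ (α_ (A ⊗ A) A A).inv
  have fuse : swap ≫ applyOuter S.t₄c A ▷ A ≫ (α_ A A A).hom ▷ A ≫ (α_ A (A ⊗ A) A).hom ≫
      A ◁ applyOuter S.m A
      = applyOuter S.t₁ A ▷ A ≫ (α_ A A A).hom ▷ A ≫ applyOuter S.m (A ⊗ A) := by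
    simpa only [swap, Category.assoc] using S.applyOuter_t₄c_comp_applyOuter_mul
  have slide : swap ≫ S.e₁ ▷ A ▷ A = S.e₁ ▷ A ▷ A ≫ swap := by
    calc
      _ = 𝟙 _ ⊗≫ ((A ⊗ A) ◁ (β_ A A).hom ≫ S.e₁ ▷ (A ⊗ A)) ⊗≫ 𝟙 _ := by
        dsimp only [swap]; monoidal
      _ = _ := by rw [whisker_exchange]; dsimp only [swap]; monoidal
  apply S.ndr.hom_ext_middle S.memAA
  rw [← cancel_epi swap]
  calc
    _ = swap ≫ applyOuter S.t₄c A ▷ A ⊗≫ A ◁ (S.e₁ ▷ A ≫ applyOuter S.m A) := by monoidal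
    _ = (swap ≫ applyOuter S.t₄c A ▷ A ≫ (α_ A A A).hom ▷ A ≫ (α_ A (A ⊗ A) A).hom ≫
          A ◁ applyOuter S.m A) ≫ A ◁ S.e₁ := by
      rw [← S.applyOuter_mul_comp_e₁]; monoidal
    _ = (applyOuter S.t₁ A ≫ (α_ A A A).hom ≫ A ◁ S.e₁) ▷ A ≫ applyOuter S.m (A ⊗ A) := by
      simp only [fuse, Category.assoc, ← whiskerRight_comp_applyOuter, comp_whiskerRight]
    _ = S.e₁ ▷ A ▷ A ≫ swap ≫ applyOuter S.t₄c A ▷ A ≫ (α_ A A A).hom ▷ A ≫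
          (α_ A (A ⊗ A) A).hom ≫ A ◁ applyOuter S.m A := by
      simp only [fuse, S.applyOuter_t₁_comp_e₁, Category.assoc, comp_whiskerRight]
    _ = _ := by
      rw [← reassoc_of% slide]; simp only [Category.assoc, comp_whiskerRight]

theorem t₁_comp_piBarR1c :
    A ◁ S.t₁ ≫ (α_ A A A).inv ≫ S.piBarR1c ▷ A
      = (α_ A A A).inv ≫ S.e₁ ▷ A ≫ (α_ A A A).hom ≫ A ◁ S.m := by
  calc
    _ = (A ◁ S.t₁ ≫ wl S.e₁) ≫ A ◁ (S.j ▷ A ≫ (λ_ A).hom) := by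
      rw [piBarR1c]; dsimp only [wl]; monoidal
    _ = wl S.e₁ ≫ A ◁ (S.t₁ ≫ S.j ▷ A ≫ (λ_ A).hom) := by
      rw [S.ax5]; monoidal
    _ = _ := by rw [← S.hm₁]; dsimp only [wl]; monoidal

section baseObject

variable {L : C} {p : A ⟶ L} {n₁ : L ⊗ A ⟶ A} {δ : L ⟶ L ⊗ L} {ε : L ⟶ 𝟙_ C} {τ : A ⟶ L ⊗ A}
  {τbar : A ⟶ A ⊗ L}

theorem t₁_comp_counit_comp_base (hpc : S.piL1 ≫ p = S.piBarR1c ≫ p) :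
    S.t₁ ≫ A ◁ S.j ≫ (ρ_ A).hom ≫ p = S.m ≫ p := by
  calc
    _ = (S.t₁ ≫ S.e₁) ≫ A ◁ S.j ≫ (ρ_ A).hom ≫ p := by rw [S.ax3]
    _ = S.t₁ ≫ S.piL1 ≫ p := by rw [hpc, piBarR1c]; simp only [Category.assoc]
    _ = (S.t₁ ≫ S.e₁) ≫ S.j ▷ A ≫ (λ_ A).hom ≫ p := by rw [piL1]; simp only [Category.assoc]
    _ = _ := by rw [S.ax3, S.hm₁]; simp only [Category.assoc]

theorem rightCoaction_comp_n₁ [Epi (S.m ▷ A)] (hn₁ : p ▷ A ≫ n₁ = S.piL1)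
    (hτbar : S.m ≫ τbar = S.t₄c ≫ A ◁ p) :
    τbar ▷ A ≫ (α_ A L A).hom ≫ A ◁ n₁ = S.e₁ := by
  rw [← cancel_epi (applyOuter S.m A)]
  calc
    _ = applyOuter (S.m ≫ τbar) A ≫ (α_ A L A).hom ≫ A ◁ n₁ := by
      rw [applyOuter_comp, Category.assoc]
    _ = applyOuter S.t₄c A ≫ (α_ A A A).hom ≫ A ◁ (p ▷ A ≫ n₁) := by
      rw [hτbar, applyOuter_comp]; monoidal
    _ = (applyOuter S.t₄c A ≫ (α_ A A A).hom ≫ A ◁ S.e₁) ≫ A ◁ (S.j ▷ A ≫ (λ_ A).hom) := by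
      rw [hn₁, piL1]; monoidal
    _ = S.e₁ ▷ A ≫ applyOuter (S.t₄c ≫ A ◁ S.j ≫ (ρ_ A).hom) A := by
      rw [S.applyOuter_t₄c_comp_e₁, applyOuter_comp]; monoidal
    _ = _ := by rw [S.t₄c_counit, S.applyOuter_mul_comp_e₁]

theorem comul_base_comp_n₁ [Epi (S.m ▷ A)] (hpc : S.piL1 ≫ p = S.piBarR1c ≫ p)
    (hn₁ : p ▷ A ≫ n₁ = S.piL1) (hδ : S.m ≫ p ≫ δ = S.t₁ ≫ p ▷ A ≫ L ◁ p) :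
    (p ≫ δ) ▷ A ≫ (α_ L L A).hom ≫ L ◁ n₁ = S.e₁ ≫ p ▷ A := by
  rw [← cancel_epi (applyOuter S.m A)]
  calc
    _ = applyOuter (S.m ≫ p ≫ δ) A ≫ (α_ L L A).hom ≫ L ◁ n₁ := by
      rw [applyOuter_comp, Category.assoc]
    _ = applyOuter S.t₁ A ⊗≫ p ▷ (A ⊗ A) ≫ L ◁ (p ▷ A ≫ n₁) := by
      rw [hδ, applyOuter_comp]; monoidal
    _ = (applyOuter S.t₁ A ≫ (α_ A A A).hom ≫ A ◁ S.e₁) ≫ A ◁ (S.j ▷ A ≫ (λ_ A).hom) ≫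
          p ▷ A := by
      rw [hn₁, ← whisker_exchange, piL1]; monoidal
    _ = S.e₁ ▷ A ≫ applyOuter (S.t₁ ≫ A ◁ S.j ≫ (ρ_ A).hom ≫ p) A := by
      rw [S.applyOuter_t₁_comp_e₁, applyOuter_comp]; monoidal
    _ = _ := by
      rw [S.t₁_comp_counit_comp_base hpc, applyOuter_comp, ← Category.assoc,
        ← S.applyOuter_mul_comp_e₁, Category.assoc]

theorem leftCoaction_comp_e₁ [Epi (S.m ▷ A)] (hτ : S.m ≫ τ = S.t₁ ≫ p ▷ A) :
    τ ▷ A ≫ (α_ L A A).hom ≫ L ◁ S.e₁ = S.e₁ ≫ τ ▷ A ≫ (α_ L A A).hom := by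
  rw [← cancel_epi (applyOuter S.m A)]
  calc
    _ = applyOuter (S.m ≫ τ) A ≫ (α_ L A A).hom ≫ L ◁ S.e₁ := by
      rw [applyOuter_comp, Category.assoc]
    _ = applyOuter S.t₁ A ⊗≫ (p ▷ (A ⊗ A) ≫ L ◁ S.e₁) := by rw [hτ, applyOuter_comp]; monoidal
    _ = (applyOuter S.t₁ A ≫ (α_ A A A).hom ≫ A ◁ S.e₁) ≫ p ▷ (A ⊗ A) := by
      rw [← whisker_exchange]; monoidal
    _ = S.e₁ ▷ A ≫ applyOuter (S.t₁ ≫ p ▷ A) A ≫ (α_ L A A).hom := by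
      rw [S.applyOuter_t₁_comp_e₁, applyOuter_comp]; monoidal
    _ = (S.e₁ ▷ A ≫ applyOuter S.m A) ≫ τ ▷ A ≫ (α_ L A A).hom := by
      rw [← hτ, applyOuter_comp]; simp only [Category.assoc]
    _ = _ := by rw [← S.applyOuter_mul_comp_e₁, Category.assoc]

theorem leftCoaction_counit [Epi S.m] (hε : p ≫ ε = S.j) (hτ : S.m ≫ τ = S.t₁ ≫ p ▷ A) :
    τ ≫ ε ▷ A ≫ (λ_ A).hom = 𝟙 A := by
  rw [← cancel_epi S.m, reassoc_of% hτ, ← comp_whiskerRight_assoc, hε, ← S.hm₁, Category.comp_id]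

theorem rightCoaction_counit [Epi S.m] (hε : p ≫ ε = S.j) (hτbar : S.m ≫ τbar = S.t₄c ≫ A ◁ p) :
    τbar ≫ A ◁ ε ≫ (ρ_ A).hom = 𝟙 A := by
  rw [← cancel_epi S.m, reassoc_of% hτbar, ← whiskerLeft_comp_assoc, hε, S.t₄c_counit,
    Category.comp_id]

theorem leftCoaction_coassoc [Epi S.m] [Epi (S.m ▷ A)]
    (hδ : S.m ≫ p ≫ δ = S.t₁ ≫ p ▷ A ≫ L ◁ p) (hτ : S.m ≫ τ = S.t₁ ≫ p ▷ A) :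
    τ ≫ L ◁ τ = τ ≫ δ ▷ A ≫ (α_ L L A).hom := by
  rw [← cancel_epi S.m, ← cancel_epi ((α_ A A A).inv ≫ S.m ▷ A)]
  calc
    _ = ((α_ A A A).inv ≫ S.m ▷ A ≫ S.m) ≫ τ ≫ L ◁ τ := by simp only [Category.assoc]
    _ = (A ◁ S.m ≫ S.t₁) ≫ p ▷ A ≫ L ◁ τ := by
      rw [← S.mul_assoc, Category.assoc, reassoc_of% hτ, Category.assoc]
    _ = 𝟙 _ ⊗≫ S.t₁ ▷ A ⊗≫ (A ◁ S.m ≫ p ▷ A) ≫ L ◁ τ := by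
      rw [S.whiskerLeft_mul_comp_t₁]; monoidal
    _ = 𝟙 _ ⊗≫ S.t₁ ▷ A ⊗≫ p ▷ (A ⊗ A) ≫ L ◁ (S.m ≫ τ) := by
      rw [whisker_exchange]; monoidal
    _ = (wl S.t₁ ≫ A ◁ S.t₁) ≫ p ▷ (A ⊗ A) ≫ L ◁ (p ▷ A) := by
      rw [hτ, whiskerLeft_comp, ← whisker_exchange_assoc]; dsimp only [wl]; monoidal
    _ = A ◁ S.t₁ ⊗≫ (β_ A A).hom ▷ A ⊗≫ A ◁ S.t₁ ⊗≫ (β_ A A).inv ▷ A ⊗≫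
          (S.t₁ ≫ p ▷ A ≫ L ◁ p) ▷ A ⊗≫ 𝟙 _ := by
      rw [← S.ax1]; dsimp only [wl]; monoidal
    _ = (A ◁ S.t₁ ⊗≫ (β_ A A).hom ▷ A ⊗≫ A ◁ S.t₁ ⊗≫ (β_ A A).inv ▷ A ⊗≫ S.m ▷ A) ⊗≫
          (p ≫ δ) ▷ A ⊗≫ 𝟙 _ := by
      rw [← hδ]; monoidal
    _ = 𝟙 _ ⊗≫ S.m ▷ A ⊗≫ (S.t₁ ≫ p ▷ A) ⊗≫ δ ▷ A ⊗≫ 𝟙 _ := by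
      rw [S.fusion_comp_mul]; monoidal
    _ = _ := by rw [← hτ]; monoidal

theorem rightCoaction_coassoc [Epi (S.m ▷ A)] (hpc : S.piL1 ≫ p = S.piBarR1c ≫ p)
    (hn₁ : p ▷ A ≫ n₁ = S.piL1) (hndn₁ : NdRightOn n₁ 𝒴) (hAL : A ⊗ L ∈ 𝒴)
    (hδ : S.m ≫ p ≫ δ = S.t₁ ≫ p ▷ A ≫ L ◁ p) (hτbar : S.m ≫ τbar = S.t₄c ≫ A ◁ p) :
    τbar ≫ A ◁ δ = τbar ≫ τbar ▷ L ≫ (α_ A L L).hom := by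
  have n₁_eq_e₁ := S.rightCoaction_comp_n₁ hn₁ hτbar
  rw [← cancel_mono (α_ A L L).inv]
  apply hndn₁.hom_ext hAL
  rw [← cancel_epi (applyOuter S.m A)]
  calc
    _ = applyOuter (S.m ≫ τbar) A ⊗≫ A ◁ (δ ▷ A ≫ (α_ L L A).hom ≫ L ◁ n₁) ⊗≫ 𝟙 _ := by
      rw [applyOuter_comp]; monoidal
    _ = applyOuter S.t₄c A ⊗≫ A ◁ ((p ≫ δ) ▷ A ≫ (α_ L L A).hom ≫ L ◁ n₁) ⊗≫ 𝟙 _ := by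
      rw [hτbar, applyOuter_comp]; monoidal
    _ = (applyOuter S.t₄c A ≫ (α_ A A A).hom ≫ A ◁ S.e₁) ⊗≫ A ◁ p ▷ A ⊗≫ 𝟙 _ := by
      rw [S.comul_base_comp_n₁ hpc hn₁ hδ]; monoidal
    _ = S.e₁ ▷ A ≫ applyOuter (S.t₄c ≫ A ◁ p) A := by
      rw [S.applyOuter_t₄c_comp_e₁, applyOuter_comp]; monoidal
    _ = applyOuter S.m A ≫ S.e₁ ≫ τbar ▷ A := by
      rw [← hτbar, applyOuter_comp, ← Category.assoc, ← S.applyOuter_mul_comp_e₁, Category.assoc]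
    _ = applyOuter S.m A ≫ τbar ▷ A ⊗≫ (A ◁ n₁ ≫ τbar ▷ A) := by rw [← n₁_eq_e₁]; monoidal
    _ = _ := by rw [whisker_exchange]; monoidal

theorem coactions_commute [Epi (S.m ▷ A)] (hn₁ : p ▷ A ≫ n₁ = S.piL1) (hndn₁ : NdRightOn n₁ 𝒴)
    (hLA : L ⊗ A ∈ 𝒴) (hτ : S.m ≫ τ = S.t₁ ≫ p ▷ A) (hτbar : S.m ≫ τbar = S.t₄c ≫ A ◁ p) :
    τbar ≫ τ ▷ L ≫ (α_ L A L).hom = τ ≫ L ◁ τbar := by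
  have n₁_eq_e₁ := S.rightCoaction_comp_n₁ hn₁ hτbar
  rw [← cancel_mono (α_ L A L).inv]
  apply hndn₁.hom_ext hLA
  calc
    _ = τbar ▷ A ⊗≫ (τ ▷ (L ⊗ A) ≫ (L ⊗ A) ◁ n₁) := by monoidal
    _ = (τbar ▷ A ≫ (α_ A L A).hom ≫ A ◁ n₁) ≫ τ ▷ A := by rw [← whisker_exchange]; monoidal
    _ = (S.e₁ ≫ τ ▷ A ≫ (α_ L A A).hom) ≫ (α_ L A A).inv := by rw [n₁_eq_e₁]; simp
    _ = τ ▷ A ⊗≫ L ◁ (τbar ▷ A ≫ (α_ A L A).hom ≫ A ◁ n₁) ⊗≫ 𝟙 _ := by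
      rw [← S.leftCoaction_comp_e₁ hτ, n₁_eq_e₁]; monoidal
    _ = _ := by monoidal

end baseObject

section rightDescent

variable {L V : C} {n₁ : L ⊗ A ⟶ A} {τbar : A ⟶ A ⊗ L} {act : A ⊗ V ⟶ V}

theorem rightLift_comp_n₁ (hτbar : τbar ▷ A ≫ (α_ A L A).hom ≫ A ◁ n₁ = S.e₁) :
    rightLift τbar act ▷ A ≫ (α_ V L A).hom ≫ V ◁ n₁
      = (α_ A V A).hom ≫ A ◁ (β_ A V).inv ≫ (α_ A A V).inv ≫ S.e₁ ▷ V ≫ applyOuter act A := by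
  symm
  calc
    _ = 𝟙 _ ⊗≫ A ◁ (β_ A V).inv ⊗≫ τbar ▷ (A ⊗ V) ⊗≫ ((A ◁ n₁) ▷ V ≫ applyOuter act A) := by
      rw [← hτbar]; monoidal
    _ = 𝟙 _ ⊗≫ A ◁ (β_ A V).inv ⊗≫ (τbar ▷ (A ⊗ V) ≫ (A ⊗ L) ◁ (β_ A V).hom) ⊗≫
          applyOuter act L ▷ A ⊗≫ V ◁ n₁ := by
      rw [whiskerRight_comp_applyOuter, applyOuter_tensor]; monoidal
    _ = 𝟙 _ ⊗≫ A ◁ ((β_ A V).inv ≫ (β_ A V).hom) ⊗≫ τbar ▷ (V ⊗ A) ⊗≫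
          applyOuter act L ▷ A ⊗≫ V ◁ n₁ := by
      rw [← whisker_exchange]; monoidal
    _ = _ := by rw [Iso.inv_hom_id, rightLift]; monoidal

theorem comp_rightLift_congr (hτbar : τbar ▷ A ≫ (α_ A L A).hom ≫ A ◁ n₁ = S.e₁)
    (hndn₁ : NdRightOn n₁ 𝒴) (hact : A ◁ act ≫ act = (α_ A A V).inv ≫ S.m ▷ V ≫ act)
    (hV : V ∈ 𝒴) (nd : NdLeftOn act 𝒴) {X : C} {f g : X ⟶ A ⊗ V} (h : f ≫ act = g ≫ act) :
    f ≫ rightLift τbar act = g ≫ rightLift τbar act := by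
  let reorder (k : X ⟶ A ⊗ V) : X ⊗ A ⟶ (A ⊗ A) ⊗ V :=
    k ▷ A ≫ (α_ A V A).hom ≫ A ◁ (β_ A V).inv ≫ (α_ A A V).inv
  have test (k : X ⟶ A ⊗ V) : (k ≫ rightLift τbar act) ▷ A ≫ (α_ V L A).hom ≫ V ◁ n₁
      = reorder k ≫ S.e₁ ▷ V ≫ applyOuter act A := by
    rw [comp_whiskerRight, Category.assoc, S.rightLift_comp_n₁ hτbar]
    simp only [reorder, Category.assoc]
  have reorder_comp (k : X ⟶ A ⊗ V) : reorder k ≫ applyOuter act A = (k ≫ act) ▷ A := by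
    simp [reorder, applyOuter]
  apply hndn₁.hom_ext hV
  rw [test, test]
  apply S.comp_e₁_whiskerRight_congr (tensorAct_comp_applyOuter hact S.m) nd S.ndl hV S.memA
  rw [reorder_comp, reorder_comp, h]

end rightDescent

section leftDescent

variable {V : C}

/-- `(1 ⊗ v) ∘ (t₁ ⊗ 1)`, which becomes the left coaction of `m a ⊗ v` once `p` is applied to its
first leg. -/
def fusionAct (act : A ⊗ V ⟶ V) : A ⊗ (A ⊗ V) ⟶ A ⊗ V :=
  (α_ A A V).inv ≫ S.t₁ ▷ V ≫ (α_ A A V).hom ≫ A ◁ act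

variable {act : A ⊗ V ⟶ V}

theorem fusionAct_comp_piBarR1c (hact : A ◁ act ≫ act = (α_ A A V).inv ≫ S.m ▷ V ≫ act) :
    A ◁ S.fusionAct act ≫ (α_ A A V).inv ≫ S.piBarR1c ▷ V
      = (α_ A A (A ⊗ V)).inv ≫ (A ⊗ A) ◁ act ≫ S.e₁ ▷ V ≫ (α_ A A V).hom ≫ A ◁ act := by
  calc
    _ = 𝟙 _ ⊗≫ A ◁ S.t₁ ▷ V ⊗≫ ((A ⊗ A) ◁ act ≫ S.piBarR1c ▷ V) := by
      rw [fusionAct]; monoidal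
    _ = 𝟙 _ ⊗≫ (A ◁ S.t₁ ≫ (α_ A A A).inv ≫ S.piBarR1c ▷ A) ▷ V ⊗≫ A ◁ act := by
      rw [whisker_exchange]; monoidal
    _ = 𝟙 _ ⊗≫ S.e₁ ▷ (A ⊗ V) ⊗≫ A ◁ ((α_ A A V).inv ≫ S.m ▷ V ≫ act) := by
      rw [S.t₁_comp_piBarR1c]; monoidal
    _ = 𝟙 _ ⊗≫ (S.e₁ ▷ (A ⊗ V) ≫ (A ⊗ A) ◁ act) ⊗≫ A ◁ act := by rw [← hact]; monoidal
    _ = _ := by rw [← whisker_exchange]; monoidal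

theorem comp_fusionAct_congr (hact : A ◁ act ≫ act = (α_ A A V).inv ≫ S.m ▷ V ≫ act)
    (hV : V ∈ 𝒴) (nd : NdLeftOn act 𝒴) {X : C} {f g : X ⟶ A ⊗ (A ⊗ V)}
    (h : f ≫ A ◁ act ≫ act = g ≫ A ◁ act ≫ act) :
    A ◁ (f ≫ S.fusionAct act) ≫ (α_ A A V).inv ≫ S.piBarR1c ▷ V
      = A ◁ (g ≫ S.fusionAct act) ≫ (α_ A A V).inv ≫ S.piBarR1c ▷ V := by
  let partialAct (k : X ⟶ A ⊗ (A ⊗ V)) : A ⊗ X ⟶ (A ⊗ A) ⊗ V :=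
    A ◁ k ≫ (α_ A A (A ⊗ V)).inv ≫ (A ⊗ A) ◁ act
  have test (k : X ⟶ A ⊗ (A ⊗ V)) :
      A ◁ (k ≫ S.fusionAct act) ≫ (α_ A A V).inv ≫ S.piBarR1c ▷ V
        = partialAct k ≫ S.e₁ ▷ V ≫ (α_ A A V).hom ≫ A ◁ act := by
    rw [whiskerLeft_comp, Category.assoc, S.fusionAct_comp_piBarR1c hact]
    simp only [partialAct, Category.assoc]
  have partialAct_comp (k : X ⟶ A ⊗ (A ⊗ V)) :
      partialAct k ≫ (α_ A A V).hom ≫ A ◁ act = A ◁ (k ≫ A ◁ act ≫ act) := by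
    simp [partialAct]
  rw [test, test]
  apply S.comp_e₁_whiskerRight_congr (tensorAct_comp_whiskerLeft hact S.m) S.ndl nd S.memA hV
  rw [partialAct_comp, partialAct_comp, h]

theorem t₁_counit_comp_mul :
    (S.t₁ ≫ A ◁ S.j ≫ (ρ_ A).hom) ▷ A ≫ S.m
      = (α_ A A A).hom ≫ A ◁ ((β_ A A).hom ≫ S.piBarR1c) ≫ S.m := by
  calc
    _ = (α_ A A A).hom ≫ (wl S.t₁ ≫ A ◁ (S.j ▷ A ≫ (λ_ A).hom) ≫ S.m) := by
      dsimp only [wl]; monoidal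
    _ = _ := by rw [S.ax7, piBarR1c]; simp only [whiskerLeft_comp, Category.assoc]

theorem mul_counit_eq : S.m ≫ S.j = (S.t₁ ≫ A ◁ S.j ≫ (ρ_ A).hom) ≫ S.j := by
  calc
    _ = S.t₁ ≫ (S.j ▷ A ≫ 𝟙_ C ◁ S.j) ≫ (λ_ (𝟙_ C)).hom := by rw [S.hm₁]; simp
    _ = _ := by rw [← whisker_exchange]; monoidal

theorem comp_t₁_counit_congr (hV : V ∈ 𝒴) {X : C} {f g : X ⟶ A ⊗ V}
    (h : A ◁ f ≫ (α_ A A V).inv ≫ S.piBarR1c ▷ V = A ◁ g ≫ (α_ A A V).inv ≫ S.piBarR1c ▷ V) :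
    A ◁ f ≫ (α_ A A V).inv ≫ (S.t₁ ≫ A ◁ S.j ≫ (ρ_ A).hom) ▷ V
      = A ◁ g ≫ (α_ A A V).inv ≫ (S.t₁ ≫ A ◁ S.j ≫ (ρ_ A).hom) ▷ V := by
  have test (k : X ⟶ A ⊗ V) :
      (A ◁ k ≫ (α_ A A V).inv ≫ (S.t₁ ≫ A ◁ S.j ≫ (ρ_ A).hom) ▷ V) ▷ A ≫ applyOuter S.m V
        = (α_ A X A).hom ≫ A ◁ (β_ X A).hom ≫
            A ◁ (A ◁ k ≫ (α_ A A V).inv ≫ S.piBarR1c ▷ V) ≫ (α_ A A V).inv ≫ S.m ▷ V := by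
    calc
      _ = (A ◁ k) ▷ A ⊗≫ ((S.t₁ ≫ A ◁ S.j ≫ (ρ_ A).hom) ▷ (V ⊗ A) ≫ A ◁ (β_ V A).hom) ⊗≫
            S.m ▷ V := by
        rw [applyOuter]; monoidal
      _ = (A ◁ k) ▷ A ⊗≫ (A ⊗ A) ◁ (β_ V A).hom ⊗≫
            ((S.t₁ ≫ A ◁ S.j ≫ (ρ_ A).hom) ▷ A ≫ S.m) ▷ V := by
        rw [← whisker_exchange]; monoidal
      _ = 𝟙 _ ⊗≫ A ◁ (k ▷ A ≫ (β_ (A ⊗ V) A).hom) ⊗≫ A ◁ S.piBarR1c ▷ V ⊗≫ S.m ▷ V := by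
        rw [S.t₁_counit_comp_mul, BraidedCategory.braiding_tensor_left_hom]; monoidal
      _ = _ := by rw [BraidedCategory.braiding_naturality_left]; monoidal
  apply S.ndr.hom_ext_braided hV
  rw [test, test, h]

theorem whiskerLeft_piL1_comp_mul :
    A ◁ ((β_ A A).hom ≫ S.piL1) ≫ S.m
      = (α_ A A A).inv ≫ S.t₁ ▷ A ≫ (α_ A A A).hom ≫ A ◁ (β_ A A).hom ≫ (α_ A A A).inv ≫
          (S.m ≫ S.j) ▷ A ≫ (λ_ A).hom := by
  calc
    _ = A ◁ (β_ A A).hom ≫ A ◁ S.e₁ ≫ A ◁ (S.j ▷ A ≫ (λ_ A).hom) ≫ S.m := by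
      rw [piL1]; simp only [whiskerLeft_comp, Category.assoc]
    _ = _ := by rw [← S.ax8]; simp [wl, ml]

theorem whiskerLeft_comp_base_comp_mul {L : C} {p : A ⟶ L} {n₁ : L ⊗ A ⟶ A}
    (hn₁ : p ▷ A ≫ n₁ = S.piL1) {X : C} (k : X ⟶ A ⊗ V) :
    (A ◁ (A ◁ (k ≫ p ▷ V) ≫ (α_ A L V).inv ≫ ((β_ A L).hom ≫ n₁) ▷ V) ≫
        (α_ A A V).inv ≫ S.m ▷ V) ≫ (β_ A V).hom
      = (α_ A A X).inv ≫ S.t₁ ▷ X ≫ (α_ A A X).hom ≫ A ◁ (β_ A X).hom ≫ (α_ A X A).inv ≫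
          (A ◁ k ≫ (α_ A A V).inv ≫ (S.m ≫ S.j) ▷ V ≫ (λ_ V).hom) ▷ A := by
  calc
    _ = 𝟙 _ ⊗≫ (A ⊗ A) ◁ k ⊗≫ (A ◁ (A ◁ p ≫ (β_ A L).hom ≫ n₁) ≫ S.m) ▷ V ≫ (β_ A V).hom := by
      monoidal
    _ = 𝟙 _ ⊗≫ (A ⊗ A) ◁ k ⊗≫ (A ◁ ((β_ A A).hom ≫ S.piL1) ≫ S.m) ▷ V ≫ (β_ A V).hom := by
      rw [BraidedCategory.braiding_naturality_right_assoc, hn₁]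
    _ = 𝟙 _ ⊗≫ (A ⊗ A) ◁ k ⊗≫ S.t₁ ▷ (A ⊗ V) ⊗≫ A ◁ (β_ A A).hom ▷ V ⊗≫
          ((S.m ≫ S.j) ▷ (A ⊗ V) ≫ 𝟙_ C ◁ (β_ A V).hom) ⊗≫ 𝟙 _ := by
      rw [S.whiskerLeft_piL1_comp_mul]; monoidal
    _ = 𝟙 _ ⊗≫ ((A ⊗ A) ◁ k ≫ S.t₁ ▷ (A ⊗ V)) ⊗≫ A ◁ (β_ A (A ⊗ V)).hom ⊗≫
          (S.m ≫ S.j) ▷ (V ⊗ A) ⊗≫ 𝟙 _ := by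
      rw [← whisker_exchange, BraidedCategory.braiding_tensor_right_hom]; monoidal
    _ = 𝟙 _ ⊗≫ S.t₁ ▷ X ⊗≫ A ◁ (A ◁ k ≫ (β_ A (A ⊗ V)).hom) ⊗≫ (S.m ≫ S.j) ▷ (V ⊗ A) ⊗≫
          𝟙 _ := by
      rw [whisker_exchange]; monoidal
    _ = _ := by rw [BraidedCategory.braiding_naturality_right]; monoidal

theorem comp_base_congr {L : C} {p : A ⟶ L} {n₁ : L ⊗ A ⟶ A} (hn₁ : p ▷ A ≫ n₁ = S.piL1)
    (hndn₁ : NdRightOn n₁ 𝒴) (hV : V ∈ 𝒴) {X : C} {f g : X ⟶ A ⊗ V}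
    (h : A ◁ f ≫ (α_ A A V).inv ≫ S.piBarR1c ▷ V = A ◁ g ≫ (α_ A A V).inv ≫ S.piBarR1c ▷ V) :
    f ≫ p ▷ V = g ≫ p ▷ V := by
  have split (k : X ⟶ A ⊗ V) : A ◁ k ≫ (α_ A A V).inv ≫ (S.m ≫ S.j) ▷ V ≫ (λ_ V).hom
      = (A ◁ k ≫ (α_ A A V).inv ≫ (S.t₁ ≫ A ◁ S.j ≫ (ρ_ A).hom) ▷ V) ≫ S.j ▷ V ≫ (λ_ V).hom := by
    rw [S.mul_counit_eq]; simp only [comp_whiskerRight, Category.assoc]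
  apply NdLeftOn.hom_ext hndn₁ hV
  apply S.ndl.hom_ext hV
  rw [← cancel_mono (β_ A V).hom, S.whiskerLeft_comp_base_comp_mul hn₁,
    S.whiskerLeft_comp_base_comp_mul hn₁, split, split, S.comp_t₁_counit_congr hV h]

theorem mul_whiskerRight_comp_leftLift {L : C} {p : A ⟶ L} {τ : A ⟶ L ⊗ A}
    (hτ : S.m ≫ τ = S.t₁ ≫ p ▷ A) :
    (α_ A A V).inv ≫ S.m ▷ V ≫ leftLift τ act = S.fusionAct act ≫ p ▷ V := by
  calc
    _ = (α_ A A V).inv ≫ (S.m ≫ τ) ▷ V ≫ (α_ L A V).hom ≫ L ◁ act := by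
      rw [leftLift, comp_whiskerRight, Category.assoc]
    _ = 𝟙 _ ⊗≫ S.t₁ ▷ V ⊗≫ (p ▷ (A ⊗ V) ≫ L ◁ act) := by rw [hτ]; monoidal
    _ = _ := by rw [← whisker_exchange, fusionAct]; monoidal

end leftDescent

theorem epi_mul [Epi (S.m ▷ 𝟙_ C)] : Epi S.m := by
  have eq : S.m = (ρ_ (A ⊗ A)).inv ≫ S.m ▷ 𝟙_ C ≫ (ρ_ A).hom := by simp
  rw [eq]
  infer_instance

section existence

variable {L V : C} {p : A ⟶ L} {n₁ : L ⊗ A ⟶ A} {act : A ⊗ V ⟶ V}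

theorem exists_leftCoaction (hn₁ : p ▷ A ≫ n₁ = S.piL1) (hndn₁ : NdRightOn n₁ 𝒴)
    [Epi (S.m ▷ V)] {τ : A ⟶ L ⊗ A} (hτ : S.m ≫ τ = S.t₁ ≫ p ▷ A)
    (hact : A ◁ act ≫ act = (α_ A A V).inv ≫ S.m ▷ V ≫ act) (hV : V ∈ 𝒴)
    (nd : NdLeftOn act 𝒴) (hreg : RegularEpi (A ◁ act ≫ act)) :
    ∃ x : V ⟶ L ⊗ V, act ≫ x = leftLift τ act := by
  have coequalizes := S.comp_base_congr hn₁ hndn₁ hV (S.comp_fusionAct_congr hact hV nd hreg.w)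
  rw [Category.assoc, Category.assoc] at coequalizes
  obtain ⟨x, hx⟩ := RegularEpi.desc' hreg _ coequalizes
  refine ⟨x, ?_⟩
  rw [← cancel_epi (S.m ▷ V), ← cancel_epi (α_ A A V).inv, S.mul_whiskerRight_comp_leftLift hτ,
    ← hx, hact]
  simp only [Category.assoc]

theorem exists_rightCoaction {τbar : A ⟶ A ⊗ L}
    (hτbar : τbar ▷ A ≫ (α_ A L A).hom ≫ A ◁ n₁ = S.e₁) (hndn₁ : NdRightOn n₁ 𝒴)
    (hact : A ◁ act ≫ act = (α_ A A V).inv ≫ S.m ▷ V ≫ act) (hV : V ∈ 𝒴)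
    (nd : NdLeftOn act 𝒴) (hreg : RegularEpi act) :
    ∃ y : V ⟶ V ⊗ L, act ≫ y = rightLift τbar act := by
  obtain ⟨y, hy⟩ :=
    RegularEpi.desc' hreg _ (S.comp_rightLift_congr hτbar hndn₁ hact hV nd hreg.w)
  exact ⟨y, hy⟩

end existence

end RWMB

section inducedCoactions

variable {A L V : C} {act : A ⊗ V ⟶ V} [Epi act] {x : V ⟶ L ⊗ V} {y : V ⟶ V ⊗ L}
  {τ : A ⟶ L ⊗ A} {τbar : A ⟶ A ⊗ L} {δ : L ⟶ L ⊗ L} {ε : L ⟶ 𝟙_ C}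

omit [BraidedCategory C] in
theorem inducedLeftCoaction_coassoc (coassoc : τ ≫ L ◁ τ = τ ≫ δ ▷ A ≫ (α_ L L A).hom)
    (hx : act ≫ x = leftLift τ act) :
    x ≫ L ◁ x = x ≫ δ ▷ V ≫ (α_ L L V).hom := by
  rw [leftLift] at hx
  rw [← cancel_epi act]
  calc
    _ = τ ▷ V ≫ (α_ L A V).hom ≫ L ◁ (act ≫ x) := by
      rw [reassoc_of% hx, whiskerLeft_comp]
    _ = (τ ≫ L ◁ τ) ▷ V ⊗≫ L ◁ L ◁ act := by rw [hx]; monoidal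
    _ = τ ▷ V ⊗≫ (δ ▷ (A ⊗ V) ≫ (L ⊗ L) ◁ act) ⊗≫ 𝟙 _ := by rw [coassoc]; monoidal
    _ = (τ ▷ V ≫ (α_ L A V).hom ≫ L ◁ act) ⊗≫ δ ▷ V ⊗≫ 𝟙 _ := by
      rw [← whisker_exchange]; monoidal
    _ = _ := by rw [← hx]; monoidal

omit [BraidedCategory C] in
theorem inducedLeftCoaction_counit (counit : τ ≫ ε ▷ A ≫ (λ_ A).hom = 𝟙 A)
    (hx : act ≫ x = leftLift τ act) : x ≫ ε ▷ V ≫ (λ_ V).hom = 𝟙 V := by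
  rw [leftLift] at hx
  rw [← cancel_epi act]
  calc
    _ = τ ▷ V ⊗≫ (L ◁ act ≫ ε ▷ V) ⊗≫ 𝟙 _ := by rw [reassoc_of% hx]; monoidal
    _ = (τ ≫ ε ▷ A ≫ (λ_ A).hom) ▷ V ≫ act := by rw [whisker_exchange]; monoidal
    _ = _ := by rw [counit]; simp

theorem inducedRightCoaction_coassoc (coassoc : τbar ≫ A ◁ δ = τbar ≫ τbar ▷ L ≫ (α_ A L L).hom)
    (hy : act ≫ y = rightLift τbar act) :
    y ≫ V ◁ δ = y ≫ y ▷ L ≫ (α_ V L L).hom := by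
  rw [rightLift] at hy
  rw [← cancel_epi act]
  calc
    _ = (τbar ≫ A ◁ δ) ▷ V ≫ applyOuter act (L ⊗ L) := by
      rw [reassoc_of% hy, comp_whiskerRight, Category.assoc, whiskerRight_comp_applyOuter]
    _ = τbar ▷ V ⊗≫ (τbar ▷ (L ⊗ V) ≫ (A ⊗ L) ◁ (β_ L V).hom) ⊗≫
          applyOuter act L ▷ L ⊗≫ 𝟙 _ := by
      rw [coassoc, applyOuter_tensor]; monoidal
    _ = τbar ▷ V ⊗≫ A ◁ (β_ L V).hom ⊗≫ (act ≫ y) ▷ L ⊗≫ 𝟙 _ := by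
      rw [← whisker_exchange, hy]; monoidal
    _ = (τbar ▷ V ≫ applyOuter act L) ≫ y ▷ L ≫ (α_ V L L).hom := by
      rw [applyOuter]; monoidal
    _ = _ := by rw [← hy, Category.assoc]

theorem inducedRightCoaction_counit (counit : τbar ≫ A ◁ ε ≫ (ρ_ A).hom = 𝟙 A)
    (hy : act ≫ y = rightLift τbar act) : y ≫ V ◁ ε ≫ (ρ_ V).hom = 𝟙 V := by
  rw [rightLift] at hy
  rw [← cancel_epi act]
  calc
    _ = (τbar ≫ A ◁ ε) ▷ V ≫ applyOuter act (𝟙_ C) ≫ (ρ_ V).hom := by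
      rw [comp_whiskerRight, Category.assoc, reassoc_of% whiskerRight_comp_applyOuter act ε,
        reassoc_of% hy]
    _ = (τbar ≫ A ◁ ε ≫ (ρ_ A).hom) ▷ V ≫ act := by
      simp [applyOuter]
    _ = _ := by rw [counit]; simp

theorem inducedCoactions_commute (commute : τbar ≫ τ ▷ L ≫ (α_ L A L).hom = τ ≫ L ◁ τbar)
    (hx : act ≫ x = leftLift τ act) (hy : act ≫ y = rightLift τbar act) :
    y ≫ x ▷ L ≫ (α_ L V L).hom = x ≫ L ◁ y := by
  rw [leftLift] at hx
  rw [rightLift] at hy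
  rw [← cancel_epi act]
  calc
    _ = τbar ▷ V ⊗≫ A ◁ (β_ L V).hom ⊗≫ (act ≫ x) ▷ L ⊗≫ 𝟙 _ := by
      rw [reassoc_of% hy, applyOuter]; monoidal
    _ = τbar ▷ V ⊗≫ (A ◁ (β_ L V).hom ≫ τ ▷ (V ⊗ L)) ⊗≫ L ◁ act ▷ L ⊗≫ 𝟙 _ := by
      rw [hx]; monoidal
    _ = 𝟙 _ ⊗≫ (τbar ≫ τ ▷ L ≫ (α_ L A L).hom) ▷ V ⊗≫ L ◁ applyOuter act L := by
      rw [whisker_exchange, applyOuter]; monoidal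
    _ = τ ▷ V ⊗≫ L ◁ (act ≫ y) := by rw [commute, hy]; monoidal
    _ = (act ≫ x) ⊗≫ L ◁ y := by rw [hx]; monoidal
    _ = _ := by monoidal

variable {W : C} {act' : A ⊗ W ⟶ W} {f : V ⟶ W}

omit [BraidedCategory C] in
theorem comp_inducedLeftCoaction (hf : act ≫ f = A ◁ f ≫ act') {x' : W ⟶ L ⊗ W}
    (hx : act ≫ x = leftLift τ act) (hx' : act' ≫ x' = leftLift τ act') :
    f ≫ x' = x ≫ L ◁ f := by
  rw [leftLift] at hx hx'
  rw [← cancel_epi act]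
  calc
    _ = (A ◁ f ≫ τ ▷ W) ≫ (α_ L A W).hom ≫ L ◁ act' := by
      rw [reassoc_of% hf, hx', Category.assoc]
    _ = τ ▷ V ⊗≫ L ◁ (A ◁ f ≫ act') := by rw [whisker_exchange]; monoidal
    _ = _ := by rw [← hf, reassoc_of% hx]; monoidal

theorem comp_inducedRightCoaction (hf : act ≫ f = A ◁ f ≫ act') {y' : W ⟶ W ⊗ L}
    (hy : act ≫ y = rightLift τbar act) (hy' : act' ≫ y' = rightLift τbar act') :
    f ≫ y' = y ≫ f ▷ L := by
  rw [rightLift] at hy hy'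
  rw [← cancel_epi act]
  calc
    _ = (A ◁ f ≫ τbar ▷ W) ≫ applyOuter act' L := by rw [reassoc_of% hf, hy', Category.assoc]
    _ = τbar ▷ V ≫ applyOuter (A ◁ f ≫ act') L := by
      rw [whisker_exchange, Category.assoc, whiskerLeft_comp_applyOuter]
    _ = _ := by rw [← hf, applyOuter_comp, reassoc_of% hy]

end inducedCoactions

theorem nonempty_regularEpi_map {D : Type*} [Category* D] {E : Type*} [Category* E] {X Y : D}
    (F : D ⥤ E) [PreservesColimitsOfShape WalkingParallelPair F] {f : X ⟶ Y}
    (hf : Nonempty (RegularEpi f)) : Nonempty (RegularEpi (F.map f)) := by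
  obtain ⟨hf⟩ := hf
  exact ⟨{
    W := F.obj hf.W
    left := F.map hf.left
    right := F.map hf.right
    w := by rw [← F.map_comp, hf.w, F.map_comp]
    isColimit := isColimitCoforkMapOfIsColimit F hf.w hf.isColimit }⟩

theorem modules_carry_L_bicomodule_structure_general
    {A : C} [PreservesColimitsOfShape WalkingParallelPair (tensorLeft A)]
    (regcomp : ∀ {X Y Z : C} (f : X ⟶ Y) (g : Y ⟶ Z),
      Nonempty (RegularEpi f) → Nonempty (RegularEpi g) → Nonempty (RegularEpi (f ≫ g)))
    {𝒴 : Set C} (S : RWMB A 𝒴) [∀ X : C, Epi (S.m ▷ X)]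
    {L : C} (memAL : A ⊗ L ∈ 𝒴) (memLA : L ⊗ A ∈ 𝒴)
    {p : A ⟶ L} (hpc : S.piL1 ≫ p = S.piBarR1c ≫ p)
    {n₁ : L ⊗ A ⟶ A} (hn₁ : p ▷ A ≫ n₁ = S.piL1) (hndn₁ : NdRightOn n₁ 𝒴)
    {δ : L ⟶ L ⊗ L} (hδ : S.m ≫ p ≫ δ = S.t₁ ≫ p ▷ A ≫ L ◁ p)
    {ε : L ⟶ 𝟙_ C} (hε : p ≫ ε = S.j)
    {τ : A ⟶ L ⊗ A} (hτ : S.m ≫ τ = S.t₁ ≫ p ▷ A)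
    {τbar : A ⟶ A ⊗ L} (hτbar : S.m ≫ τbar = (β_ A A).hom ≫ S.t₄ ≫ A ◁ p) :
    (∀ M : AModule A S.m 𝒴, ∃ (τV : M.V ⟶ L ⊗ M.V) (τbV : M.V ⟶ M.V ⊗ L),
      (M.act ≫ τV = leftLift τ M.act) ∧
      (∀ τV' : M.V ⟶ L ⊗ M.V, M.act ≫ τV' = leftLift τ M.act → τV' = τV) ∧
      (M.act ≫ τbV = rightLift τbar M.act) ∧
      (∀ τbV' : M.V ⟶ M.V ⊗ L, M.act ≫ τbV' = rightLift τbar M.act → τbV' = τbV) ∧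
      (τV ≫ L ◁ τV = τV ≫ δ ▷ M.V ≫ (α_ L L M.V).hom) ∧
      (τV ≫ ε ▷ M.V ≫ (λ_ M.V).hom = 𝟙 M.V) ∧
      (τbV ≫ M.V ◁ δ = τbV ≫ τbV ▷ L ≫ (α_ M.V L L).hom) ∧
      (τbV ≫ M.V ◁ ε ≫ (ρ_ M.V).hom = 𝟙 M.V) ∧
      (τbV ≫ τV ▷ L ≫ (α_ L M.V L).hom = τV ≫ L ◁ τbV)) ∧
    (∀ (M N : AModule A S.m 𝒴) (f : M.V ⟶ N.V), M.act ≫ f = A ◁ f ≫ N.act →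
      ∀ (τM : M.V ⟶ L ⊗ M.V) (τN : N.V ⟶ L ⊗ N.V)
        (τbM : M.V ⟶ M.V ⊗ L) (τbN : N.V ⟶ N.V ⊗ L),
        M.act ≫ τM = leftLift τ M.act → N.act ≫ τN = leftLift τ N.act →
        M.act ≫ τbM = rightLift τbar M.act → N.act ≫ τbN = rightLift τbar N.act →
        (f ≫ τN = τM ≫ L ◁ f) ∧ (f ≫ τbN = τbM ≫ f ▷ L)) := by
  replace hτbar : S.m ≫ τbar = S.t₄c ≫ A ◁ p := by rw [hτbar, RWMB.t₄c, Category.assoc]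
  have hbar := S.rightCoaction_comp_n₁ hn₁ hτbar
  have epi_m : Epi S.m := S.epi_mul
  have epi_act (M : AModule A S.m 𝒴) : Epi M.act := M.regEpi.elim (RegularEpi.epi _)
  refine ⟨fun M ↦ ?_, fun M N f hf τM τN τbM τbN hτM hτN hτbM hτbN ↦
    ⟨comp_inducedLeftCoaction hf hτM hτN, comp_inducedRightCoaction hf hτbM hτbN⟩⟩
  obtain ⟨hreg₂⟩ := regcomp (A ◁ M.act) M.act
    (nonempty_regularEpi_map (tensorLeft A) M.regEpi) M.regEpi
  obtain ⟨hreg⟩ := M.regEpi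
  obtain ⟨x, hx⟩ := S.exists_leftCoaction hn₁ hndn₁ hτ M.assoc M.mem M.nd hreg₂
  obtain ⟨y, hy⟩ := S.exists_rightCoaction hbar hndn₁ M.assoc M.mem M.nd hreg
  exact ⟨x, y, hx, fun x' hx' ↦ (cancel_epi M.act).mp (hx'.trans hx.symm),
    hy, fun y' hy' ↦ (cancel_epi M.act).mp (hy'.trans hy.symm),
    inducedLeftCoaction_coassoc (S.leftCoaction_coassoc hδ hτ) hx,
    inducedLeftCoaction_counit (S.leftCoaction_counit hε hτ) hx,
    inducedRightCoaction_coassoc (S.rightCoaction_coassoc hpc hn₁ hndn₁ memAL hδ hτbar) hy,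
    inducedRightCoaction_counit (S.rightCoaction_counit hε hτbar) hy,
    inducedCoactions_commute (S.coactions_commute hn₁ hndn₁ memLA hτ hτbar) hx hy⟩

/-- Theorem 4.3: every module over the semigroup `A` carries the
structure of an `L`-bicomodule, and every morphism of `A`-modules is a morphism of
`L`-bicomodules; hence there is a functor from `A`-modules to `L`-bicomodules acting
as the identity on morphisms. -/
theorem modules_carry_L_bicomodule_structure
    [HasCoequalizers C]
    (presL : ∀ X : C, PreservesColimitsOfShape WalkingParallelPair (tensorLeft X))
    (presR : ∀ X : C, PreservesColimitsOfShape WalkingParallelPair (tensorRight X))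
    (regcomp : ∀ {X Y Z : C} (f : X ⟶ Y) (g : Y ⟶ Z),
      Nonempty (RegularEpi f) → Nonempty (RegularEpi g) → Nonempty (RegularEpi (f ≫ g)))
    {A : C} {𝒴 : Set C} (S : RWMB A 𝒴)
    (hmreg : Nonempty (RegularEpi S.m))
    (hclosed : ∀ Y Y' : C, Y ∈ 𝒴 → Y' ∈ 𝒴 → (Y ⊗ Y') ∈ 𝒴)
    (L : C) (p : A ⟶ L)
    (hpc : S.piL1 ≫ p = S.piBarR1c ≫ p)
    (hpu : ∀ {X : C} (h : A ⟶ X), S.piL1 ≫ h = S.piBarR1c ≫ h →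
      ∃! k : L ⟶ X, p ≫ k = h)
    (memL : L ∈ 𝒴)
    (n₁ : L ⊗ A ⟶ A) (hn₁ : (p ▷ A) ≫ n₁ = S.piL1)
    (hndn₁ : NdRightOn n₁ 𝒴)
    (n₂ : A ⊗ L ⟶ A) (hn₂ : (A ◁ p) ≫ n₂ = S.piL2)
    (μ : L ⊗ L ⟶ L) (hμ : (L ◁ p) ≫ μ = n₁ ≫ p)
    (δ : L ⟶ L ⊗ L) (hδ : S.m ≫ p ≫ δ = S.t₁ ≫ (p ▷ A) ≫ (L ◁ p))
    (ε : L ⟶ 𝟙_ C) (hε : p ≫ ε = S.j)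
    (hμδ : δ ≫ μ = 𝟙 L)
    -- the coactions of Proposition 4.1 on `A`
    (τ : A ⟶ L ⊗ A) (hτ : S.m ≫ τ = S.t₁ ≫ (p ▷ A))
    (τbar : A ⟶ A ⊗ L) (hτbar : S.m ≫ τbar = (β_ A A).hom ≫ S.t₄ ≫ (A ◁ p)) :
    -- every `A`-module carries a unique `L`-bicomodule structure
    (∀ M : AModule A S.m 𝒴,
      ∃ (τV : M.V ⟶ L ⊗ M.V) (τbV : M.V ⟶ M.V ⊗ L),
        -- defining property and uniqueness of the left coaction
        (M.act ≫ τV = (τ ▷ M.V) ≫ (α_ L A M.V).hom ≫ (L ◁ M.act)) ∧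
        (∀ τV' : M.V ⟶ L ⊗ M.V,
          M.act ≫ τV' = (τ ▷ M.V) ≫ (α_ L A M.V).hom ≫ (L ◁ M.act) → τV' = τV) ∧
        -- defining property and uniqueness of the right coaction
        (M.act ≫ τbV = (τbar ▷ M.V) ≫ (α_ A L M.V).hom ≫ (A ◁ (β_ L M.V).hom) ≫
          (α_ A M.V L).inv ≫ (M.act ▷ L)) ∧
        (∀ τbV' : M.V ⟶ M.V ⊗ L,
          M.act ≫ τbV' = (τbar ▷ M.V) ≫ (α_ A L M.V).hom ≫ (A ◁ (β_ L M.V).hom) ≫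
            (α_ A M.V L).inv ≫ (M.act ▷ L) → τbV' = τbV) ∧
        -- `τV` is a coassociative counital left `L`-coaction
        (τV ≫ (L ◁ τV) = τV ≫ (δ ▷ M.V) ≫ (α_ L L M.V).hom) ∧
        (τV ≫ (ε ▷ M.V) ≫ (λ_ M.V).hom = 𝟙 M.V) ∧
        -- `τbV` is a coassociative counital right `L`-coaction
        (τbV ≫ (M.V ◁ δ) = τbV ≫ (τbV ▷ L) ≫ (α_ M.V L L).hom) ∧
        (τbV ≫ (M.V ◁ ε) ≫ (ρ_ M.V).hom = 𝟙 M.V) ∧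
        -- the two coactions commute
        (τbV ≫ (τV ▷ L) ≫ (α_ L M.V L).hom = τV ≫ (L ◁ τbV))) ∧
    -- every morphism of `A`-modules is a morphism of `L`-bicomodules
    (∀ (M N : AModule A S.m 𝒴) (f : M.V ⟶ N.V),
      M.act ≫ f = (A ◁ f) ≫ N.act →
      ∀ (τM : M.V ⟶ L ⊗ M.V) (τN : N.V ⟶ L ⊗ N.V)
        (τbM : M.V ⟶ M.V ⊗ L) (τbN : N.V ⟶ N.V ⊗ L),
        M.act ≫ τM = (τ ▷ M.V) ≫ (α_ L A M.V).hom ≫ (L ◁ M.act) →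
        N.act ≫ τN = (τ ▷ N.V) ≫ (α_ L A N.V).hom ≫ (L ◁ N.act) →
        M.act ≫ τbM = (τbar ▷ M.V) ≫ (α_ A L M.V).hom ≫ (A ◁ (β_ L M.V).hom) ≫
          (α_ A M.V L).inv ≫ (M.act ▷ L) →
        N.act ≫ τbN = (τbar ▷ N.V) ≫ (α_ A L N.V).hom ≫ (A ◁ (β_ L N.V).hom) ≫
          (α_ A N.V L).inv ≫ (N.act ▷ L) →
        (f ≫ τN = τM ≫ (L ◁ f)) ∧ (f ≫ τbN = τbM ≫ (f ▷ L))) := by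
  have (X : C) : Epi (S.m ▷ X) :=
    (nonempty_regularEpi_map (tensorRight X) hmreg).elim (RegularEpi.epi _)
  exact modules_carry_L_bicomodule_structure_general regcomp S (hclosed _ _ S.memA memL)
    (hclosed _ _ memL S.memA) hpc hn₁ hndn₁ hδ hε hτ hτbar

end WeakMultiplierBimonoid
end
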